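/- arXiv:2602.12001 — 2 statements merged into one kernel-verified Lean document; each statement's English description precedes it below -/
import Mathlib

section
/- Let n ≥ 2, f ∈ C¹(ℝ), and let u be a W^{3,1}_loc(ℝⁿ) stable solution of div(∇u/√(1+|∇u|²)) = −f(u) in ℝⁿ which is radially symmetric with respect to the origin. If u is nonconstant, then there exist c > 0 and R₀ > 2 such that ⨍_{B_{2R}∖B_R} |∇u|²/(1+|∇u|²)^{3/2} dx ≥ c R^{−n+2√(n−1)+2} for all R ≥ R₀. -/
open MeasureTheory Metric Real Filter Asymptotics Bornology
open scoped RealInnerProductSpace Topology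

noncomputable section

/-- Euclidean space `ℝⁿ`. -/
abbrev Euc (n : ℕ) := EuclideanSpace ℝ (Fin n)

/-- `φ` is an admissible test function on `Ω`: smooth with compact support contained in `Ω`
(i.e. `φ ∈ C_c^∞(Ω)`). -/
def IsTestFun {n : ℕ} (Ω : Set (Euc n)) (φ : Euc n → ℝ) : Prop :=
  ContDiff ℝ (⊤ : ℕ∞) φ ∧ HasCompactSupport φ ∧ tsupport φ ⊆ Ω

/-- `u` is a weak solution of the mean curvature equation
`div(∇u/√(1+|∇u|²)) = -f(u)` in `Ω`:  `u ∈ W^{1,1}_loc(Ω)`, `f(u) ∈ L¹_loc(Ω)` and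
`∫_Ω ∇u·∇φ/√(1+|∇u|²) = ∫_Ω f(u) φ` for every `φ ∈ C_c^∞(Ω)`. -/
def IsWeakSolution {n : ℕ} (Ω : Set (Euc n)) (f : ℝ → ℝ) (u : Euc n → ℝ) : Prop :=
  LocallyIntegrableOn u Ω ∧
  LocallyIntegrableOn (fun x => ‖gradient u x‖) Ω ∧
  LocallyIntegrableOn (fun x => f (u x)) Ω ∧
  ∀ φ : Euc n → ℝ, IsTestFun Ω φ →
    ∫ x in Ω, ⟪gradient u x, gradient φ x⟫ / Real.sqrt (1 + ‖gradient u x‖ ^ 2)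
      = ∫ x in Ω, f (u x) * φ x

/-- `u` is a stable solution of `div(∇u/√(1+|∇u|²)) = -f(u)` in `Ω`: it is a weak solution,
`f'(u) ∈ L¹_loc(Ω)` and the second variation of the energy at `u` is nonnegative:
`∫_Ω f'(u) ξ² ≤ ∫_Ω (|∇ξ|²/√(1+|∇u|²) - (∇u·∇ξ)²/(1+|∇u|²)^{3/2})` for all `ξ ∈ C_c^∞(Ω)`. -/
def IsStableSolution {n : ℕ} (Ω : Set (Euc n)) (f : ℝ → ℝ) (u : Euc n → ℝ) : Prop :=
  IsWeakSolution Ω f u ∧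
  LocallyIntegrableOn (fun x => deriv f (u x)) Ω ∧
  ∀ ξ : Euc n → ℝ, IsTestFun Ω ξ →
    ∫ x in Ω, deriv f (u x) * ξ x ^ 2 ≤
      ∫ x in Ω, (‖gradient ξ x‖ ^ 2 / Real.sqrt (1 + ‖gradient u x‖ ^ 2)
        - ⟪gradient u x, gradient ξ x⟫ ^ 2 / (1 + ‖gradient u x‖ ^ 2) ^ ((3:ℝ)/2))

/-- A vector field `g` belongs to the Morrey space `M^p(Ω)`: there is `K > 0` with
`∫_{B_ρ(x₀) ∩ Ω} |g| ≤ K ρ^{n(1-1/p)}` for all `x₀ ∈ Ω` and `0 < ρ ≤ diam Ω`. -/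
def MemMorrey {n : ℕ} (Ω : Set (Euc n)) (p : ℝ) (g : Euc n → Euc n) : Prop :=
  ∃ K > (0:ℝ), ∀ x₀ ∈ Ω, ∀ ρ : ℝ, 0 < ρ → ρ ≤ Metric.diam Ω →
    ∫ x in Metric.ball x₀ ρ ∩ Ω, ‖g x‖ ≤ K * ρ ^ ((n : ℝ) * (1 - 1 / p))

/-- Gradient of a radial function away from the origin. -/
lemma grad_radial {n : ℕ} (φ : ℝ → ℝ) (F : Euc n → ℝ) (hF : ∀ x, F x = φ ‖x‖) (x : Euc n)
    (hx : x ≠ 0) (d : ℝ) (h : HasDerivAt φ d ‖x‖) : gradient F x = (d / ‖x‖) • x := by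
  have hx' : 0 < ‖x‖ := norm_pos_iff.mpr hx
  have h1 : HasFDerivAt (fun y : Euc n => ‖y‖) (‖x‖⁻¹ • innerSL ℝ x) x := by
    have h2 : HasFDerivAt (fun y : Euc n => ‖y‖ ^ 2) (2 • innerSL ℝ x) x :=
      (hasStrictFDerivAt_norm_sq x).hasFDerivAt
    have h3 := h2.sqrt (by positivity)
    have h4 : (fun y : Euc n => √(‖y‖ ^ 2)) = fun y => ‖y‖ := by
      ext y; exact Real.sqrt_sq (norm_nonneg _)
    rw [h4] at h3
    convert! h3 using 1
    ext y
    simp [Real.sqrt_sq hx'.le]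
    field_simp
  have h5 := h.comp_hasFDerivAt x h1
  have h6 : F = φ ∘ fun y : Euc n => ‖y‖ := by ext y; exact hF y
  rw [← h6] at h5
  apply HasGradientAt.gradient
  rw [hasGradientAt_iff_hasFDerivAt]
  convert! h5 using 1
  ext y
  simp [real_inner_smul_left]
  ring

lemma approx_C1 {n : ℕ} (ξ : Euc n → ℝ) (hξ : ContDiff ℝ 1 ξ) (hc : HasCompactSupport ξ) :
    ∃ ρ : ℝ, (∀ x, ρ < ‖x‖ → ξ x = 0 ∧ gradient ξ x = 0) ∧ ∀ ε > (0:ℝ), ∃ ξ' : Euc n → ℝ,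
      IsTestFun Set.univ ξ' ∧
      (∀ x, ρ < ‖x‖ → ξ' x = 0 ∧ gradient ξ' x = 0) ∧
      (∀ x, |ξ' x - ξ x| ≤ ε) ∧ (∀ x, ‖gradient ξ' x - gradient ξ x‖ ≤ ε) := by
  obtain ⟨ρ, hρ⟩ := hc.isCompact.isBounded.subset_closedBall (0 : Euc n)
  have hz : ∀ (F : Euc n → ℝ) (r : ℝ), (∀ x, r < ‖x‖ → F x = 0) → ∀ x, r < ‖x‖ → gradient F x = 0 := by
    intro F r hF x hx
    have h1 : F =ᶠ[𝓝 x] fun _ => 0 := by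
      filter_upwards [(isOpen_lt continuous_const continuous_norm).mem_nhds hx] with y hy
      exact hF y hy
    rw [gradient, h1.fderiv_eq]
    simp
  have hξ0 : ∀ x, ρ < ‖x‖ → ξ x = 0 := by
    intro x hx
    apply image_eq_zero_of_notMem_tsupport
    intro h
    have := hρ h
    simp at this
    linarith
  refine ⟨ρ + 1, fun x hx => ⟨hξ0 x (by linarith), hz ξ ρ hξ0 x (by linarith)⟩, ?_⟩
  intro ε hε
  have hdc : Continuous (fderiv ℝ ξ) := hξ.continuous_fderiv (by norm_num)
  have hu1 := hc.uniformContinuous_of_continuous hξ.continuous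
  have hu2 := (hc.fderiv ℝ).uniformContinuous_of_continuous hdc
  rw [Metric.uniformContinuous_iff] at hu1 hu2
  obtain ⟨δ1, hδ1, h1⟩ := hu1 ε hε
  obtain ⟨δ2, hδ2, h2⟩ := hu2 ε hε
  set δ := min (min δ1 δ2) 1 with hδ
  have hδ0 : 0 < δ := by positivity
  let b : ContDiffBump (0 : Euc n) := ⟨δ / 2, δ, by positivity, by linarith⟩
  let ξ' := convolution (b.normed volume) ξ (ContinuousLinearMap.lsmul ℝ ℝ) volume
  have hbl : LocallyIntegrable (b.normed (volume : Measure (Euc n))) volume :=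
    b.continuous_normed.locallyIntegrable
  have hfd : ∀ x, HasFDerivAt ξ' (convolution (b.normed volume) (fderiv ℝ ξ)
      (ContinuousLinearMap.lsmul ℝ ℝ) volume x) x := by
    intro x
    exact hc.hasFDerivAt_convolution_right (ContinuousLinearMap.lsmul ℝ ℝ) hbl hξ x
  have hξ'0 : ∀ x, ρ + 1 < ‖x‖ → ξ' x = 0 := by
    intro x hx
    by_contra hne
    have hm : x ∈ Function.support ξ' := hne
    have hm2 := support_convolution_subset (ContinuousLinearMap.lsmul ℝ ℝ) hm
    rw [Set.mem_add] at hm2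
    obtain ⟨y, hy, z, hzz, rfl⟩ := hm2
    rw [b.support_normed_eq] at hy
    have hy' : ‖y‖ < δ := by simpa using hy
    have hz' : ‖z‖ ≤ ρ := by
      by_contra hlt
      exact hzz (hξ0 z (not_le.mp hlt))
    have := norm_add_le y z
    have : δ ≤ 1 := min_le_right _ _
    linarith
  refine ⟨ξ', ⟨?_, ?_, Set.subset_univ _⟩, fun x hx => ⟨hξ'0 x hx, hz ξ' _ hξ'0 x hx⟩, ?_, ?_⟩
  · exact b.hasCompactSupport_normed.contDiff_convolution_left _ b.contDiff_normed
      hξ.continuous.locallyIntegrable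
  · exact b.hasCompactSupport_normed.convolution _ hc
  · intro x
    have := ContDiffBump.dist_normed_convolution_le (μ := volume) (φ := b) (x₀ := x) (ε := ε) (g := ξ)
      hξ.continuous.aestronglyMeasurable (fun y hy => (h1 (lt_of_lt_of_le (mem_ball.mp hy)
        ((min_le_left _ _).trans (min_le_left _ _)))).le)
    simpa [Real.dist_eq] using this
  · intro x
    have := ContDiffBump.dist_normed_convolution_le (μ := volume) (φ := b) (x₀ := x) (ε := ε)
      (g := fderiv ℝ ξ)
      hdc.aestronglyMeasurable (fun y hy => (h2 (lt_of_lt_of_le (mem_ball.mp hy)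
        ((min_le_left _ _).trans (min_le_right _ _)))).le)
    rw [gradient, gradient, (hfd x).fderiv, ← map_sub, LinearIsometryEquiv.norm_map, ← dist_eq_norm]
    exact this

lemma continuous_gradient {n : ℕ} (u : Euc n → ℝ) (hu : ContDiff ℝ 1 u) :
    Continuous (gradient u) :=
  (LinearIsometryEquiv.continuous _).comp (hu.continuous_fderiv (by norm_num))

/-- The stability inequality extends to `C¹` compactly supported test functions. -/
lemma stab_C1 {n : ℕ} (f : ℝ → ℝ) (u : Euc n → ℝ) (hf : ContDiff ℝ 1 f) (hu : ContDiff ℝ 3 u)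
    (hs : IsStableSolution (Set.univ : Set (Euc n)) f u)
    (ξ : Euc n → ℝ) (hξ : ContDiff ℝ 1 ξ) (hc : HasCompactSupport ξ) :
    ∫ x, deriv f (u x) * ξ x ^ 2 ≤
      ∫ x, (‖gradient ξ x‖ ^ 2 / Real.sqrt (1 + ‖gradient u x‖ ^ 2)
        - ⟪gradient u x, gradient ξ x⟫ ^ 2 / (1 + ‖gradient u x‖ ^ 2) ^ ((3:ℝ)/2)) := by
  obtain ⟨ρ, h0, happ⟩ := approx_C1 ξ hξ hc
  have hk : ∀ k : ℕ, (0:ℝ) < 1 / ((k:ℝ) + 1) := fun k => by positivity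
  choose ξk ht hz hd hg using fun k : ℕ => happ _ (hk k)
  have hlim : Tendsto (fun k : ℕ => 1 / ((k:ℝ) + 1)) atTop (𝓝 0) :=
    tendsto_one_div_add_atTop_nhds_zero_nat
  have hle1 : ∀ k : ℕ, 1 / ((k:ℝ) + 1) ≤ 1 := by
    intro k
    rw [div_le_one (by positivity)]
    have : (0:ℝ) ≤ k := Nat.cast_nonneg k
    linarith
  have cu := hu.continuous
  have cgu : Continuous (gradient u) := continuous_gradient u (hu.of_le (by norm_num))
  have cgx : Continuous (gradient ξ) := continuous_gradient ξ hξ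
  have cfu : Continuous (fun x => deriv f (u x)) := (hf.continuous_deriv (by norm_num)).comp cu
  have hgk : ∀ k, Continuous (gradient (ξk k)) := fun k =>
    continuous_gradient _ ((ht k).1.of_le (by exact_mod_cast le_top))
  have hpos : ∀ x, 0 < 1 + ‖gradient u x‖ ^ 2 := fun x => by positivity
  have csq : Continuous (fun x => Real.sqrt (1 + ‖gradient u x‖ ^ 2)) := by fun_prop
  have crp : Continuous (fun x => (1 + ‖gradient u x‖ ^ 2) ^ ((3:ℝ)/2)) := by
    apply Continuous.rpow_const (by fun_prop)
    intro x; left; exact (hpos x).ne'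
  have l1 : ∀ x, Tendsto (fun k => ξk k x) atTop (𝓝 (ξ x)) := by
    intro x
    rw [tendsto_iff_dist_tendsto_zero]
    exact squeeze_zero (fun _ => dist_nonneg) (fun k => by rw [Real.dist_eq]; exact hd k x) hlim
  have l2 : ∀ x, Tendsto (fun k => gradient (ξk k) x) atTop (𝓝 (gradient ξ x)) := by
    intro x
    rw [tendsto_iff_dist_tendsto_zero]
    exact squeeze_zero (fun _ => dist_nonneg) (fun k => by rw [dist_eq_norm]; exact hg k x) hlim
  have hint : ∀ G : Euc n → ℝ, Continuous G → Integrable ((closedBall (0 : Euc n) ρ).indicator G) := by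
    intro G hG
    rw [integrable_indicator_iff measurableSet_closedBall]
    exact hG.continuousOn.integrableOn_compact (isCompact_closedBall _ _)
  have T1 : Tendsto (fun k => ∫ x, deriv f (u x) * ξk k x ^ 2) atTop
      (𝓝 (∫ x, deriv f (u x) * ξ x ^ 2)) := by
    apply tendsto_integral_of_dominated_convergence
      ((closedBall (0 : Euc n) ρ).indicator (fun x => |deriv f (u x)| * (|ξ x| + 1) ^ 2))
    · intro k
      exact (cfu.mul ((ht k).1.continuous.pow 2)).aestronglyMeasurable
    · apply hint
      have := hξ.continuous
      fun_prop
    · intro k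
      refine Eventually.of_forall fun x => ?_
      by_cases hx : x ∈ closedBall (0 : Euc n) ρ
      · rw [Set.indicator_of_mem hx, norm_mul, Real.norm_eq_abs, norm_pow, Real.norm_eq_abs]
        gcongr
        have := abs_sub_abs_le_abs_sub (ξk k x) (ξ x)
        have := hd k x
        have := hle1 k
        linarith
      · rw [Set.indicator_of_notMem hx]
        have : ρ < ‖x‖ := by simpa using hx
        simp [(hz k x this).1]
    · exact Eventually.of_forall fun x => ((l1 x).pow 2).const_mul _
  have T2 : Tendsto (fun k => ∫ x, (‖gradient (ξk k) x‖ ^ 2 / Real.sqrt (1 + ‖gradient u x‖ ^ 2)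
        - ⟪gradient u x, gradient (ξk k) x⟫ ^ 2 / (1 + ‖gradient u x‖ ^ 2) ^ ((3:ℝ)/2))) atTop
      (𝓝 (∫ x, (‖gradient ξ x‖ ^ 2 / Real.sqrt (1 + ‖gradient u x‖ ^ 2)
        - ⟪gradient u x, gradient ξ x⟫ ^ 2 / (1 + ‖gradient u x‖ ^ 2) ^ ((3:ℝ)/2)))) := by
    apply tendsto_integral_of_dominated_convergence
      ((closedBall (0 : Euc n) ρ).indicator (fun x =>
        (‖gradient ξ x‖ + 1) ^ 2 / Real.sqrt (1 + ‖gradient u x‖ ^ 2)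
        + (‖gradient u x‖ * (‖gradient ξ x‖ + 1)) ^ 2 / (1 + ‖gradient u x‖ ^ 2) ^ ((3:ℝ)/2)))
    · intro k
      apply Continuous.aestronglyMeasurable
      have := hgk k
      apply Continuous.sub
      · exact Continuous.div (by fun_prop) csq (fun x => (Real.sqrt_pos.mpr (hpos x)).ne')
      · exact Continuous.div (by fun_prop) crp (fun x => (Real.rpow_pos_of_pos (hpos x) _).ne')
    · apply hint
      apply Continuous.add
      · exact Continuous.div (by fun_prop) csq (fun x => (Real.sqrt_pos.mpr (hpos x)).ne')
      · exact Continuous.div (by fun_prop) crp (fun x => (Real.rpow_pos_of_pos (hpos x) _).ne')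
    · intro k
      refine Eventually.of_forall fun x => ?_
      by_cases hx : x ∈ closedBall (0 : Euc n) ρ
      · rw [Set.indicator_of_mem hx]
        have hb : ‖gradient (ξk k) x‖ ≤ ‖gradient ξ x‖ + 1 := by
          have := norm_sub_norm_le (gradient (ξk k) x) (gradient ξ x)
          have := hg k x
          have := hle1 k
          linarith
        have hp1 := Real.sqrt_pos.mpr (hpos x)
        have hp2 := Real.rpow_pos_of_pos (hpos x) ((3:ℝ)/2)
        refine (norm_sub_le _ _).trans ?_
        rw [Real.norm_of_nonneg (by positivity), Real.norm_of_nonneg (by positivity)]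
        gcongr ?_ / _ + ?_ / _
        · gcongr
        · rw [← sq_abs]
          gcongr
          exact (abs_real_inner_le_norm _ _).trans (by gcongr)
      · rw [Set.indicator_of_notMem hx]
        have : ρ < ‖x‖ := by simpa using hx
        simp [(hz k x this).2]
    · refine Eventually.of_forall fun x => ?_
      apply Tendsto.sub
      · exact (((l2 x).norm).pow 2).div_const _
      · exact ((tendsto_const_nhds.inner (l2 x)).pow 2).div_const _
  refine le_of_tendsto_of_tendsto' T1 T2 fun k => ?_
  have := hs.2.2 (ξk k) (ht k)
  simpa only [Measure.restrict_univ] using this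

/-- Polar coordinates. -/
lemma polar_int {n : ℕ} (hn : 2 ≤ n) (F : Euc n → ℝ) (G : ℝ → ℝ)
    (h : ∀ x, x ≠ 0 → F x = G ‖x‖) :
    ∫ x, F x = n * (volume : Measure (Euc n)).real (ball 0 1) *
      ∫ r in Set.Ioi (0:ℝ), r ^ (n - 1) * G r := by
  haveI : Nonempty (Fin n) := ⟨⟨0, by omega⟩⟩
  haveI : Nontrivial (Euc n) := inferInstance
  have h1 : ∫ x, F x = ∫ x : Euc n, G ‖x‖ := by
    apply integral_congr_ae
    have : ∀ᵐ x : Euc n, x ≠ 0 := by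
      rw [ae_iff]
      simp
    filter_upwards [this] with x hx using h x hx
  rw [h1, integral_fun_norm_addHaar]
  simp [mul_assoc]

/-- The radial profile. -/
lemma exists_profile {n : ℕ} (hn : 2 ≤ n) (u : Euc n → ℝ) (g : ℝ → ℝ) (hreg : ContDiff ℝ 3 u)
    (hradial : ∀ x : Euc n, u x = g ‖x‖) :
    ∃ v : ℝ → ℝ, ContDiff ℝ 3 v ∧ ∀ x : Euc n, u x = v ‖x‖ := by
  let e : Euc n := EuclideanSpace.single ⟨0, by omega⟩ 1
  have he : ‖e‖ = 1 := by simp [e]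
  refine ⟨fun r => u (r • e), hreg.comp (contDiff_id.smul contDiff_const), fun x => ?_⟩
  simp only [hradial, norm_smul, he, norm_norm, mul_one]

/-- The flux `w / √(1+w²)` of the profile. -/
def flux (v : ℝ → ℝ) (r : ℝ) : ℝ := deriv v r / Real.sqrt (1 + deriv v r ^ 2)

lemma hasDerivAt_flux {v : ℝ → ℝ} (hv : ContDiff ℝ 3 v) (r : ℝ) :
    HasDerivAt (flux v) (1 / (1 + deriv v r ^ 2) ^ ((3:ℝ)/2) * deriv (deriv v) r) r := by
  have hw : HasDerivAt (deriv v) (deriv (deriv v) r) r := by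
    have h2 : ContDiff ℝ 2 (deriv v) := by
      have : ContDiff ℝ (2 + 1) v := by norm_num; exact hv
      exact (contDiff_succ_iff_deriv.mp this).2.2
    exact (h2.differentiable (by norm_num) r).hasDerivAt
  have hpos : 0 < 1 + deriv v r ^ 2 := by positivity
  have h1 := (hw.pow 2).const_add 1
  have h2 := h1.sqrt hpos.ne'
  have h3 := hw.div h2 (Real.sqrt_pos.mpr hpos).ne'
  refine h3.congr_deriv ?_
  have h4 : (1 + deriv v r ^ 2) ^ ((3:ℝ)/2) = Real.sqrt (1 + deriv v r ^ 2) ^ 3 := by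
    rw [Real.sqrt_eq_rpow, ← Real.rpow_mul_natCast hpos.le]
    norm_num
  rw [h4]
  have hs := Real.sqrt_pos.mpr hpos
  have hsq := Real.sq_sqrt hpos.le
  simp only [Pi.pow_apply]
  set s := Real.sqrt (1 + deriv v r ^ 2)
  field_simp
  push_cast
  rw [hsq]
  ring

lemma contDiff_deriv_profile {v : ℝ → ℝ} (hv : ContDiff ℝ 3 v) : ContDiff ℝ 2 (deriv v) := by
  have : ContDiff ℝ (2 + 1) v := by norm_num; exact hv
  exact (contDiff_succ_iff_deriv.mp this).2.2

lemma contDiff_flux {v : ℝ → ℝ} (hv : ContDiff ℝ 3 v) : ContDiff ℝ 2 (flux v) := by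
  have hw := contDiff_deriv_profile hv
  have hpos : ∀ r, 0 < 1 + deriv v r ^ 2 := fun r => by positivity
  apply ContDiff.div hw
  · apply ContDiff.sqrt
    · exact contDiff_const.add (hw.pow 2)
    · exact fun r => (hpos r).ne'
  · exact fun r => (Real.sqrt_pos.mpr (hpos r)).ne'

lemma inner_radial {n : ℕ} (x : Euc n) (hx : x ≠ 0) (a b : ℝ) :
    ⟪(a / ‖x‖) • x, (b / ‖x‖) • x⟫ = a * b := by
  have : ‖x‖ ≠ 0 := norm_ne_zero_iff.mpr hx
  rw [real_inner_smul_left, real_inner_smul_right, real_inner_self_eq_norm_sq]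
  field_simp

lemma normsq_radial {n : ℕ} (x : Euc n) (hx : x ≠ 0) (a : ℝ) :
    ‖(a / ‖x‖) • x‖ ^ 2 = a ^ 2 := by
  rw [← real_inner_self_eq_norm_sq, inner_radial x hx]; ring

/-- The equation for the radial profile. -/
lemma radial_ode {n : ℕ} (hn : 2 ≤ n) (f : ℝ → ℝ) (u : Euc n → ℝ) (v : ℝ → ℝ) (hf : ContDiff ℝ 1 f)
    (hv : ContDiff ℝ 3 v) (huv : ∀ x, u x = v ‖x‖)
    (hs : IsWeakSolution (Set.univ : Set (Euc n)) f u) (r : ℝ) (hr : 0 < r) :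
    f (v r) = -(deriv (flux v) r + ((n:ℝ) - 1) / r * flux v r) := by
  have hN : Nonempty (Fin n) := ⟨⟨0, by omega⟩⟩
  have hω : 0 < n * (volume : Measure (Euc n)).real (ball 0 1) := by
    have h1 : 0 < (volume : Measure (Euc n)).real (ball 0 1) :=
      ENNReal.toReal_pos (measure_ball_pos _ _ one_pos).ne' measure_ball_lt_top.ne
    have : (0:ℝ) < n := by exact_mod_cast (by omega : 0 < n)
    positivity
  have hp := contDiff_flux hv
  let Q : ℝ → ℝ := fun r => r ^ (n - 1) * flux v r
  have hQ : ContDiff ℝ 1 Q := (contDiff_id.pow _).mul (hp.of_le (by norm_num))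
  have hQd : ∀ r, HasDerivAt Q (deriv Q r) r := fun r =>
    (hQ.differentiable (by norm_num) r).hasDerivAt
  have cQ' : Continuous (deriv Q) := hQ.continuous_deriv (by norm_num)
  let H : ℝ → ℝ := fun r => deriv Q r + r ^ (n - 1) * f (v r)
  have cf := hf.continuous
  have cv := hv.continuous
  have cH : Continuous H := by
    apply cQ'.add
    fun_prop
  have key : ∀ ψ : ℝ → ℝ, ContDiff ℝ (⊤ : ℕ∞) ψ → HasCompactSupport ψ → tsupport ψ ⊆ Set.Ioi 0 →
      ∫ r, ψ r • H r = 0 := by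
    intro ψ hψ hψc hψs
    have hψ0 : ∀ r, r ≤ 0 → ψ r = 0 := fun r hr => by
      apply image_eq_zero_of_notMem_tsupport
      intro h
      have := hψs h
      simp at this
      linarith
    have hψ'0 : ∀ r, r ≤ 0 → deriv ψ r = 0 := fun r hr => by
      apply image_eq_zero_of_notMem_tsupport
      intro h
      have := hψs (tsupport_deriv_subset h)
      simp at this
      linarith
    have hψd : ∀ r, HasDerivAt ψ (deriv ψ r) r := fun r =>
      (hψ.differentiable (by simp) r).hasDerivAt
    have cψ' : Continuous (deriv ψ) := hψ.continuous_deriv (by simp)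
    have hφ : IsTestFun Set.univ (fun x : Euc n => ψ ‖x‖) := by
      refine ⟨?_, ?_, Set.subset_univ _⟩
      · rw [contDiff_iff_contDiffAt]
        intro x
        by_cases hx : x = 0
        · have h0 : (0:ℝ) ∉ tsupport ψ := fun h => by simpa using hψs h
          have h1 : ψ =ᶠ[𝓝 (0:ℝ)] 0 := notMem_tsupport_iff_eventuallyEq.mp h0
          have h2 : (fun x : Euc n => ψ ‖x‖) =ᶠ[𝓝 x] fun _ => 0 := by
            have : Tendsto (fun x : Euc n => ‖x‖) (𝓝 x) (𝓝 0) := by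
              rw [hx]; exact tendsto_norm_zero
            exact this.eventually h1
          exact contDiffAt_const.congr_of_eventuallyEq h2
        · exact hψ.contDiffAt.comp x (contDiffAt_norm ℝ hx)
      · obtain ⟨ρ, hρ⟩ := hψc.isCompact.isBounded.subset_closedBall (0:ℝ)
        apply HasCompactSupport.intro (isCompact_closedBall (0 : Euc n) ρ)
        intro x hx
        apply image_eq_zero_of_notMem_tsupport
        intro h
        have := hρ h
        simp at this hx
        linarith
    have hw := hs.2.2.2 _ hφ
    simp only [Measure.restrict_univ] at hw
    rw [polar_int hn _ (fun r => flux v r * deriv ψ r),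
      polar_int hn _ (fun r => f (v r) * ψ r)] at hw
    rotate_left
    · intro x hx
      rw [huv]
    · intro x hx
      rw [grad_radial v u huv x hx _ ((hv.differentiable (by norm_num) _).hasDerivAt),
        grad_radial ψ _ (fun _ => rfl) x hx _ (hψd _), inner_radial x hx, normsq_radial x hx, flux]
      ring
    have hw2 := mul_left_cancel₀ hω.ne' hw
    have e1 : ∀ G : ℝ → ℝ, (∀ r, r ≤ 0 → G r = 0) → ∫ r in Set.Ioi (0:ℝ), G r = ∫ r, G r := by
      intro G hG
      apply setIntegral_eq_integral_of_forall_compl_eq_zero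
      intro x hx
      exact hG x (by simpa using hx)
    rw [e1 _ (fun r hr => by simp [hψ'0 r hr]), e1 _ (fun r hr => by simp [hψ0 r hr])] at hw2
    have hint : ∀ G : ℝ → ℝ, Continuous G → Integrable (fun r => G r * ψ r) := fun G hG =>
      (hG.mul hψ.continuous).integrable_of_hasCompactSupport hψc.mul_left
    have hint' : ∀ G : ℝ → ℝ, Continuous G → Integrable (fun r => G r * deriv ψ r) := fun G hG =>
      (hG.mul cψ').integrable_of_hasCompactSupport hψc.deriv.mul_left
    have h0 : ∫ r, (deriv Q r * ψ r + Q r * deriv ψ r) = 0 := by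
      apply integral_eq_zero_of_hasDerivAt_of_integrable (f := fun r => Q r * ψ r)
      · intro r
        exact (hQd r).mul (hψd r)
      · exact (hint _ cQ').add (hint' _ hQ.continuous)
      · exact hint _ hQ.continuous
    rw [integral_add (hint _ cQ') (hint' _ hQ.continuous)] at h0
    have h1 : ∫ r, ψ r • H r = (∫ r, deriv Q r * ψ r) + ∫ r, (r ^ (n - 1) * f (v r)) * ψ r := by
      rw [← integral_add (hint _ cQ') (hint _ (by fun_prop))]
      congr 1
      ext r
      simp [H]; ring
    rw [h1]
    have h2 : ∫ r, (r ^ (n - 1) * f (v r)) * ψ r = ∫ r, Q r * deriv ψ r := by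
      simp only [Q, mul_assoc]
      exact hw2.symm
    rw [h2, h0]
  have hae := isOpen_Ioi.ae_eq_zero_of_integral_contDiff_smul_eq_zero (U := Set.Ioi (0:ℝ)) (μ := volume)
    (cH.locallyIntegrable.locallyIntegrableOn _) key
  have hH : Set.EqOn H (fun _ => 0) (Set.Ioi 0) := by
    apply Measure.eqOn_open_of_ae_eq (μ := volume) _ isOpen_Ioi cH.continuousOn continuousOn_const
    exact (ae_restrict_iff' measurableSet_Ioi).mpr hae
  have h1 : deriv Q r + r ^ (n - 1) * f (v r) = 0 := hH hr
  have h2 : deriv Q r = ((n - 1 : ℕ) : ℝ) * r ^ (n - 1 - 1) * flux v r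
      + r ^ (n - 1) * deriv (flux v) r :=
    ((hasDerivAt_pow (n - 1) r).mul (hp.differentiable (by norm_num) r).hasDerivAt).deriv
  rw [h2] at h1
  obtain ⟨k, rfl⟩ : ∃ k, n = k + 2 := ⟨n - 2, by omega⟩
  have e1 : k + 2 - 1 = k + 1 := rfl
  have e2 : k + 1 - 1 = k := rfl
  rw [e1, e2] at h1
  have hr' : r ^ k ≠ 0 := by positivity
  have h3 : r ^ k * (r * f (v r)) = r ^ k * (-(r * deriv (flux v) r + (k + 1) * flux v r)) := by
    push_cast at h1
    rw [pow_succ] at h1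
    linear_combination h1
  have h4 := mul_left_cancel₀ hr' h3
  push_cast
  field_simp
  linear_combination h4

lemma radial_ode' (k : ℕ) (f : ℝ → ℝ) (v : ℝ → ℝ) (hf : ContDiff ℝ 1 f)
    (hv : ContDiff ℝ 3 v)
    (hode : ∀ r > 0, f (v r) = -(deriv (flux v) r + ((k:ℝ) + 1) / r * flux v r))
    (r : ℝ) (hr : 0 < r) :
    r ^ 2 * (deriv f (v r) * deriv v r)
      = -(r ^ 2 * deriv (deriv (flux v)) r + (k + 1) * (r * deriv (flux v) r - flux v r)) := by
  have hp := contDiff_flux hv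
  have hp1 : ContDiff ℝ 1 (deriv (flux v)) := by
    have : ContDiff ℝ (1 + 1) (flux v) := by norm_num; exact hp
    exact (contDiff_succ_iff_deriv.mp this).2.2
  have h1 : HasDerivAt (fun r => f (v r)) (deriv f (v r) * deriv v r) r :=
    (hf.differentiable (by norm_num) _).hasDerivAt.comp r (hv.differentiable (by norm_num) r).hasDerivAt
  have d1 := (hp1.differentiable (by norm_num) r).hasDerivAt
  have d0 := (hp.differentiable (by norm_num) r).hasDerivAt
  have h2 := (d1.add (((hasDerivAt_const r ((k:ℝ)+1)).div (hasDerivAt_id r) hr.ne').mul d0)).neg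
  have h3 : (fun r => f (v r)) =ᶠ[𝓝 r]
      -(deriv (flux v) + ((fun _ => ((k:ℝ)+1)) / id) * flux v) := by
    filter_upwards [isOpen_Ioi.mem_nhds hr] with s hs
    rw [hode s hs]
    simp
  have h4 := h1.unique (h2.congr_of_eventuallyEq h3)
  rw [h4]
  simp
  field_simp
  ring

lemma integrableOn_aux (G : ℝ → ℝ) (hG : Continuous G) (ρ : ℝ) (h : ∀ r, ρ ≤ r → G r = 0) :
    IntegrableOn G (Set.Ioi 0) := by
  have h1 : IntegrableOn G (Set.Icc 0 ρ) := hG.continuousOn.integrableOn_compact isCompact_Icc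
  have h2 : IntegrableOn G (Set.Ioi ρ) := by
    have : IntegrableOn (fun _ => (0:ℝ)) (Set.Ioi ρ) := integrableOn_zero
    exact this.congr_fun (fun x hx => (h x (le_of_lt hx)).symm) measurableSet_Ioi
  refine (h1.union h2).mono_set ?_
  intro x hx
  simp at hx ⊢
  by_cases hxx : x ≤ ρ
  · left; exact ⟨hx.le, hxx⟩
  · right; linarith

lemma key1d (k : ℕ) (f v z : ℝ → ℝ) (hf : ContDiff ℝ 1 f) (hv : ContDiff ℝ 3 v) (hz : ContDiff ℝ 1 z)
    (ρ : ℝ) (hρ : ∀ r, ρ ≤ r → z r = 0) (hρ' : ∀ r, ρ ≤ r → deriv z r = 0)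
    (hode : ∀ r > 0, f (v r) = -(deriv (flux v) r + ((k:ℝ) + 1) / r * flux v r))
    (hst : ∫ r in Set.Ioi (0:ℝ), r ^ (k + 1) * (deriv f (v r) * (r * deriv v r * z r) ^ 2) ≤
      ∫ r in Set.Ioi (0:ℝ), r ^ (k + 1) * (1 / (1 + deriv v r ^ 2) ^ ((3:ℝ)/2) *
        (deriv v r * z r + r * deriv (deriv v) r * z r + r * deriv v r * deriv z r) ^ 2)) :
    0 ≤ ∫ r in Set.Ioi (0:ℝ), r ^ (k + 1) * (deriv v r ^ 2 / (1 + deriv v r ^ 2) ^ ((3:ℝ)/2) *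
      ((z r + r * deriv z r) ^ 2 - ((k:ℝ) + 1) * z r ^ 2)) := by
  have hw := contDiff_deriv_profile hv
  have cw := hw.continuous
  have cw' : Continuous (deriv (deriv v)) := hw.continuous_deriv (by norm_num)
  have cv := hv.continuous
  have cz := hz.continuous
  have cz' : Continuous (deriv z) := hz.continuous_deriv (by norm_num)
  have cf' : Continuous (deriv f) := hf.continuous_deriv (by norm_num)
  have hpos : ∀ r, 0 < 1 + deriv v r ^ 2 := fun r => by positivity
  have crp : Continuous (fun r => (1 + deriv v r ^ 2) ^ ((3:ℝ)/2)) := by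
    apply Continuous.rpow_const (by fun_prop)
    intro x; left; exact (hpos x).ne'
  have hrp : ∀ r, 0 < (1 + deriv v r ^ 2) ^ ((3:ℝ)/2) := fun r => Real.rpow_pos_of_pos (hpos r) _
  have cm : Continuous (fun r => 1 / (1 + deriv v r ^ 2) ^ ((3:ℝ)/2)) :=
    continuous_const.div crp (fun r => (hrp r).ne')
  have cW : Continuous (fun r => deriv v r ^ 2 / (1 + deriv v r ^ 2) ^ ((3:ℝ)/2)) :=
    (cw.pow 2).div crp (fun r => (hrp r).ne')
  have hp := contDiff_flux hv
  have cp := hp.continuous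
  have hp1 : ContDiff ℝ 1 (deriv (flux v)) := by
    have : ContDiff ℝ (1 + 1) (flux v) := by norm_num; exact hp
    exact (contDiff_succ_iff_deriv.mp this).2.2
  have cp1 := hp1.continuous
  have cp2 : Continuous (deriv (deriv (flux v))) := hp1.continuous_deriv (by norm_num)
  let L : ℝ → ℝ := fun r => r ^ (k + 1) * (deriv f (v r) * (r * deriv v r * z r) ^ 2)
  let S : ℝ → ℝ := fun r => r ^ (k + 1) * (1 / (1 + deriv v r ^ 2) ^ ((3:ℝ)/2) *
        (deriv v r * z r + r * deriv (deriv v) r * z r + r * deriv v r * deriv z r) ^ 2)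
  let G : ℝ → ℝ := fun r => r ^ (k + 1) * (deriv v r ^ 2 / (1 + deriv v r ^ 2) ^ ((3:ℝ)/2) *
      ((z r + r * deriv z r) ^ 2 - ((k:ℝ) + 1) * z r ^ 2))
  let B : ℝ → ℝ := fun r => r ^ (k + 3) * (deriv (flux v) r * (deriv v r * (z r) ^ 2))
  let B' : ℝ → ℝ := fun r => (k + 3) * r ^ (k + 2) * (deriv (flux v) r * (deriv v r * (z r) ^ 2))
    + r ^ (k + 3) * (deriv (deriv (flux v)) r * (deriv v r * (z r) ^ 2) +
      deriv (flux v) r * (deriv (deriv v) r * (z r) ^ 2 + deriv v r * (2 * z r * deriv z r)))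
  have iL : IntegrableOn L (Set.Ioi 0) := by
    apply integrableOn_aux _ _ ρ
    · intro r hr; simp [L, hρ r hr]
    · fun_prop
  have iS : IntegrableOn S (Set.Ioi 0) := by
    apply integrableOn_aux _ _ ρ
    · intro r hr; simp [S, hρ r hr, hρ' r hr]
    · fun_prop
  have iG : IntegrableOn G (Set.Ioi 0) := by
    apply integrableOn_aux _ _ ρ
    · intro r hr; simp [G, hρ r hr, hρ' r hr]
    · fun_prop
  have iB' : IntegrableOn B' (Set.Ioi 0) := by
    apply integrableOn_aux _ _ ρ
    · intro r hr; simp [B', hρ r hr]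
    · fun_prop
  have hBd : ∀ r, HasDerivAt B (B' r) r := by
    intro r
    have dw := (hw.differentiable (by norm_num) r).hasDerivAt
    have dz := (hz.differentiable (by norm_num) r).hasDerivAt
    have dp := (hp1.differentiable (by norm_num) r).hasDerivAt
    have := (hasDerivAt_pow (k + 3) r).mul (dp.mul (dw.mul (dz.pow 2)))
    refine this.congr_deriv ?_
    simp [B']
  have hB0 : ∫ r in Set.Ioi (0:ℝ), B' r = 0 - B 0 := by
    apply integral_Ioi_of_hasDerivAt_of_tendsto' (fun r _ => hBd r) iB'
    apply tendsto_const_nhds.congr'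
    filter_upwards [eventually_ge_atTop ρ] with r hr
    simp [B, hρ r hr]
  have hB00 : B 0 = 0 := by simp [B]
  rw [hB00, sub_zero] at hB0
  have hle : ∫ r in Set.Ioi (0:ℝ), (S r - L r) ≤ ∫ r in Set.Ioi (0:ℝ), (B' r + G r) := by
    apply setIntegral_mono_on (iS.sub iL) (iB'.add iG) measurableSet_Ioi
    intro r hr
    have hr : 0 < r := hr
    have heq := radial_ode' k f v hf hv hode r hr
    have hd := (hasDerivAt_flux hv r).deriv
    have hpw : deriv v r ^ 2 * (1 / (1 + deriv v r ^ 2) ^ ((3:ℝ)/2)) ≤ flux v r * deriv v r := by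
      rw [flux, Real.sqrt_eq_rpow, div_mul_eq_mul_div, ← pow_two, div_eq_mul_one_div (deriv v r ^ 2)]
      gcongr
      · simp; positivity
      · norm_num
    have hid : S r - L r = B' r + r ^ (k + 1) * ((1 / (1 + deriv v r ^ 2) ^ ((3:ℝ)/2)) * deriv v r ^ 2
        * (z r + r * deriv z r) ^ 2 - (k + 1) * (flux v r * deriv v r) * z r ^ 2) := by
      simp only [S, L, B']
      rw [hd] at heq ⊢
      linear_combination (-(r ^ (k + 1) * deriv v r * z r ^ 2)) * heq
    change S r - L r ≤ B' r + G r
    rw [hid]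
    have h2 : G r = r ^ (k + 1) * ((1 / (1 + deriv v r ^ 2) ^ ((3:ℝ)/2)) * deriv v r ^ 2
        * (z r + r * deriv z r) ^ 2 - (k + 1) *
          (deriv v r ^ 2 * (1 / (1 + deriv v r ^ 2) ^ ((3:ℝ)/2))) * z r ^ 2) := by
      simp only [G]; ring
    rw [h2]
    gcongr
  rw [integral_sub iS iL, integral_add iB' iG, hB0] at hle
  have : 0 ≤ (∫ r in Set.Ioi (0:ℝ), S r) - ∫ r in Set.Ioi (0:ℝ), L r := sub_nonneg.mpr hst
  linarith

lemma radial_stab {n : ℕ} (hn : 2 ≤ n) (f : ℝ → ℝ) (u : Euc n → ℝ) (v z : ℝ → ℝ)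
    (hf : ContDiff ℝ 1 f) (hu : ContDiff ℝ 3 u)
    (hv : ContDiff ℝ 3 v) (huv : ∀ x, u x = v ‖x‖)
    (hs : IsStableSolution (Set.univ : Set (Euc n)) f u)
    (hz : ContDiff ℝ 1 z) (hzE : ContDiff ℝ 1 (fun x : Euc n => z ‖x‖))
    (ρ : ℝ) (hρ : ∀ r, ρ ≤ r → z r = 0) :
    0 ≤ ∫ r in Set.Ioi (0:ℝ), r ^ (n - 1) * (deriv v r ^ 2 / (1 + deriv v r ^ 2) ^ ((3:ℝ)/2) *
      ((z r + r * deriv z r) ^ 2 - ((n:ℝ) - 1) * z r ^ 2)) := by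
  have hN : Nonempty (Fin n) := ⟨⟨0, by omega⟩⟩
  have hω : 0 < n * (volume : Measure (Euc n)).real (ball 0 1) := by
    have h1 : 0 < (volume : Measure (Euc n)).real (ball 0 1) :=
      ENNReal.toReal_pos (measure_ball_pos _ _ one_pos).ne' measure_ball_lt_top.ne
    have : (0:ℝ) < n := by exact_mod_cast (by omega : 0 < n)
    positivity
  have hode := radial_ode hn f u v hf hv huv hs.1
  have hw := contDiff_deriv_profile hv
  have hgu : ∀ x : Euc n, x ≠ 0 → gradient u x = (deriv v ‖x‖ / ‖x‖) • x := fun x hx =>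
    grad_radial v u huv x hx _ ((hv.differentiable (by norm_num) _).hasDerivAt)
  let ξ : Euc n → ℝ := fun x => fderiv ℝ u x x * z ‖x‖
  have hξe : ∀ x, ξ x = ‖x‖ * deriv v ‖x‖ * z ‖x‖ := by
    intro x
    simp only [ξ]
    congr 1
    by_cases hx : x = 0
    · simp [hx]
    · have h1 : fderiv ℝ u x x = ⟪gradient u x, x⟫ := by
        rw [gradient, InnerProductSpace.toDual_symm_apply]
      rw [h1, hgu x hx, real_inner_smul_left, real_inner_self_eq_norm_sq]
      have : ‖x‖ ≠ 0 := norm_ne_zero_iff.mpr hx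
      field_simp
  have hξ : ContDiff ℝ 1 ξ := by
    apply ContDiff.mul _ hzE
    exact (hu.fderiv_right (m := 1) (by norm_num)).clm_apply contDiff_id
  have hξc : HasCompactSupport ξ := by
    apply HasCompactSupport.intro (isCompact_closedBall (0 : Euc n) ρ)
    intro x hx
    have : ρ < ‖x‖ := by simpa using hx
    simp [ξ, hρ _ this.le]
  have key := stab_C1 f u hf hu hs ξ hξ hξc
  have hψd : ∀ r, HasDerivAt (fun r => r * deriv v r * z r)
      (deriv v r * z r + r * deriv (deriv v) r * z r + r * deriv v r * deriv z r) r := by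
    intro r
    have dw := (hw.differentiable (by norm_num) r).hasDerivAt
    have dz := (hz.differentiable (by norm_num) r).hasDerivAt
    refine (((hasDerivAt_id r).mul dw).mul dz).congr_deriv ?_
    simp
    ring
  rw [polar_int hn _ (fun r => deriv f (v r) * (r * deriv v r * z r) ^ 2),
    polar_int hn _ (fun r => (1 / (1 + deriv v r ^ 2) ^ ((3:ℝ)/2) *
        (deriv v r * z r + r * deriv (deriv v) r * z r + r * deriv v r * deriv z r) ^ 2))] at key
  rotate_left
  · intro x hx
    rw [grad_radial _ ξ hξe x hx _ (hψd _), hgu x hx, inner_radial x hx, normsq_radial x hx,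
      normsq_radial x hx]
    set a := deriv v ‖x‖
    set b := a * z ‖x‖ + ‖x‖ * deriv (deriv v) ‖x‖ * z ‖x‖ + ‖x‖ * a * deriv z ‖x‖
    have hpos : 0 < 1 + a ^ 2 := by positivity
    have h4 : (1 + a ^ 2) ^ ((3:ℝ)/2) = Real.sqrt (1 + a ^ 2) ^ 3 := by
      rw [Real.sqrt_eq_rpow, ← Real.rpow_mul_natCast hpos.le]
      norm_num
    rw [h4]
    have hs := Real.sqrt_pos.mpr hpos
    have hsq := Real.sq_sqrt hpos.le
    set s := Real.sqrt (1 + a ^ 2)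
    field_simp
    rw [hsq]
    ring
  · intro x hx
    rw [huv, hξe]
  have key2 := le_of_mul_le_mul_left key hω
  have hz' : ∀ r, ρ + 1 ≤ r → deriv z r = 0 := by
    intro r hr
    have : z =ᶠ[𝓝 r] fun _ => 0 := by
      filter_upwards [isOpen_Ioi.mem_nhds (show ρ < r by linarith)] with y hy
      exact hρ y (le_of_lt hy)
    rw [this.deriv_eq]
    simp
  obtain ⟨k, rfl⟩ : ∃ k, n = k + 2 := ⟨n - 2, by omega⟩
  have hc : ((k + 2 : ℕ) : ℝ) - 1 = (k:ℝ) + 1 := by push_cast; ring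
  rw [hc]
  rw [hc] at hode
  exact key1d k f v z hf hv hz (ρ + 1) (fun r hr => hρ r (by linarith)) hz'
    (fun r hr => hode r hr) key2

/-- The power weight. -/
def qw (s r : ℝ) : ℝ := (1 + r ^ 2) ^ (-(s + 1) / 2)

/-- The cut-off power weight. -/
def zw (s R r : ℝ) : ℝ := qw s r * Real.smoothTransition ((4 - r ^ 2 / R ^ 2) / 3)

lemma qw_pos (s r : ℝ) : 0 < qw s r := Real.rpow_pos_of_pos (by positivity) _

lemma hasDerivAt_qw (s r : ℝ) :
    HasDerivAt (qw s) (qw s r * (-(s + 1) * r / (1 + r ^ 2))) r := by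
  have hpos : 0 < 1 + r ^ 2 := by positivity
  have h1 : HasDerivAt (fun r : ℝ => 1 + r ^ 2) (2 * r) r := by
    simpa using (hasDerivAt_pow 2 r).const_add 1
  have h2 := h1.rpow_const (p := -(s + 1) / 2) (Or.inl hpos.ne')
  refine h2.congr_deriv ?_
  rw [Real.rpow_sub_one hpos.ne', qw]
  field_simp

lemma hasDerivAt_zw (s R r : ℝ) :
    HasDerivAt (zw s R) (qw s r * (-(s + 1) * r / (1 + r ^ 2)) *
        Real.smoothTransition ((4 - r ^ 2 / R ^ 2) / 3) +
      qw s r * (deriv Real.smoothTransition ((4 - r ^ 2 / R ^ 2) / 3) * (-(2 * r / R ^ 2) / 3))) r := by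
  have h1 : HasDerivAt (fun r : ℝ => (4 - r ^ 2 / R ^ 2) / 3) (-(2 * r / R ^ 2) / 3) r := by
    simpa using (((hasDerivAt_pow 2 r).div_const (R ^ 2)).const_sub 4).div_const 3
  have h2 : HasDerivAt Real.smoothTransition (deriv Real.smoothTransition ((4 - r ^ 2 / R ^ 2) / 3))
      ((4 - r ^ 2 / R ^ 2) / 3) :=
    ((Real.smoothTransition.contDiff (n := 1)).differentiable (by norm_num) _).hasDerivAt
  have h3 : HasDerivAt (fun r : ℝ => Real.smoothTransition ((4 - r ^ 2 / R ^ 2) / 3))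
      (deriv Real.smoothTransition ((4 - r ^ 2 / R ^ 2) / 3) * (-(2 * r / R ^ 2) / 3)) r :=
    HasDerivAt.comp (h₂ := Real.smoothTransition) r h2 h1
  exact (hasDerivAt_qw s r).mul h3

lemma contDiff_aux {E : Type*} [NormedAddCommGroup E] [InnerProductSpace ℝ E] (s R : ℝ) :
    ContDiff ℝ 1 (fun x : E => zw s R ‖x‖) := by
  have h : ContDiff ℝ 1 (fun x : E => ‖x‖ ^ 2) := contDiff_norm_sq ℝ
  unfold zw qw
  apply ContDiff.mul
  · apply ContDiff.rpow_const_of_ne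
    · exact contDiff_const.add h
    · intro x; positivity
  · apply (Real.smoothTransition.contDiff (n := 1)).comp
    exact (contDiff_const.sub (h.div_const _)).div_const _

lemma contDiff_zw (s R : ℝ) : ContDiff ℝ 1 (zw s R) := by
  have h := contDiff_aux (E := ℝ) s R
  have : (fun x : ℝ => zw s R ‖x‖) = zw s R := by
    ext x
    simp [zw, qw]
  rwa [this] at h

lemma zw_eq_zero (s R r : ℝ) (hR : 0 < R) (hr : 2 * R ≤ r) : zw s R r = 0 := by
  have h : (4 - r ^ 2 / R ^ 2) / 3 ≤ 0 := by
    have : 4 ≤ r ^ 2 / R ^ 2 := by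
      rw [le_div_iff₀ (by positivity)]
      nlinarith
    linarith
  simp [zw, Real.smoothTransition.zero_of_nonpos h]

lemma deriv_trans_low (y : ℝ) (h : y ≤ 0) : deriv Real.smoothTransition y = 0 := by
  apply IsLocalMin.deriv_eq_zero
  refine Eventually.of_forall fun t => ?_
  rw [Real.smoothTransition.zero_of_nonpos h]
  exact Real.smoothTransition.nonneg t

lemma deriv_trans_high (y : ℝ) (h : 1 ≤ y) : deriv Real.smoothTransition y = 0 := by
  apply IsLocalMax.deriv_eq_zero
  refine Eventually.of_forall fun t => ?_
  rw [Real.smoothTransition.one_of_one_le h]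
  exact Real.smoothTransition.le_one t

lemma deriv_trans_bdd : ∃ M : ℝ, 0 ≤ M ∧ ∀ y, |deriv Real.smoothTransition y| ≤ M := by
  have hc : Continuous (deriv Real.smoothTransition) :=
    (Real.smoothTransition.contDiff (n := 1)).continuous_deriv (by norm_num)
  obtain ⟨M, hM⟩ := isCompact_Icc.exists_bound_of_continuousOn (s := Set.Icc (0:ℝ) 1) hc.continuousOn
  have h0 : 0 ≤ M := (norm_nonneg _).trans (hM 0 (by simp))
  refine ⟨M, h0, fun y => ?_⟩
  by_cases h1 : y ≤ 0
  · rw [deriv_trans_low y h1]; simpa using h0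
  by_cases h2 : 1 ≤ y
  · rw [deriv_trans_high y h2]; simpa using h0
  exact hM y ⟨by linarith, by linarith⟩

/-- The defect. -/
def defect (s r : ℝ) : ℝ := qw s r ^ 2 * (s ^ 2 - ((1 - s * r ^ 2) / (1 + r ^ 2)) ^ 2)

lemma ratio_le (s r : ℝ) (hs : 1 ≤ s) : |(1 - s * r ^ 2) / (1 + r ^ 2)| ≤ s := by
  have hpos : 0 < 1 + r ^ 2 := by positivity
  rw [abs_div, abs_of_pos hpos, div_le_iff₀ hpos, abs_le]
  constructor <;> nlinarith [sq_nonneg r]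

lemma defect_nonneg (s r : ℝ) (hs : 1 ≤ s) : 0 ≤ defect s r := by
  have h := ratio_le s r hs
  have : ((1 - s * r ^ 2) / (1 + r ^ 2)) ^ 2 ≤ s ^ 2 := by
    rw [← sq_abs ((1 - s * r ^ 2) / (1 + r ^ 2))]
    gcongr
  unfold defect
  have := qw_pos s r
  apply mul_nonneg (by positivity)
  linarith

lemma defect_pos (s r : ℝ) (hs : 1 ≤ s) (hr : 0 < r) : 0 < defect s r := by
  have h : |(1 - s * r ^ 2) / (1 + r ^ 2)| < s := by
    have hpos : 0 < 1 + r ^ 2 := by positivity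
    rw [abs_div, abs_of_pos hpos, div_lt_iff₀ hpos, abs_lt]
    have : 0 < r ^ 2 := by positivity
    constructor <;> nlinarith
  have : ((1 - s * r ^ 2) / (1 + r ^ 2)) ^ 2 < s ^ 2 := by
    rw [← sq_abs ((1 - s * r ^ 2) / (1 + r ^ 2))]
    gcongr
  unfold defect
  have := qw_pos s r
  apply mul_pos (by positivity)
  linarith

lemma continuous_defect (s : ℝ) : Continuous (defect s) := by
  have h1 : Continuous (qw s) := continuous_iff_continuousAt.mpr fun r => (hasDerivAt_qw s r).continuousAt
  unfold defect
  have : Continuous (fun r : ℝ => (1 - s * r ^ 2) / (1 + r ^ 2)) :=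
    Continuous.div (by fun_prop) (by fun_prop) (fun r => by positivity)
  fun_prop

lemma euler_zw (s R r : ℝ) : zw s R r + r * deriv (zw s R) r =
    qw s r * ((1 - s * r ^ 2) / (1 + r ^ 2) * Real.smoothTransition ((4 - r ^ 2 / R ^ 2) / 3)
      - deriv Real.smoothTransition ((4 - r ^ 2 / R ^ 2) / 3) * (2 * (r ^ 2 / R ^ 2) / 3)) := by
  rw [(hasDerivAt_zw s R r).deriv, zw]
  have hpos : 1 + r ^ 2 ≠ 0 := by positivity
  field_simp
  ring

lemma D_inner (s R r : ℝ) (hr : 0 < r) (hrR : r < R) :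
    (zw s R r + r * deriv (zw s R) r) ^ 2 - s ^ 2 * zw s R r ^ 2 = - defect s r := by
  have h : 1 ≤ (4 - r ^ 2 / R ^ 2) / 3 := by
    have : r ^ 2 / R ^ 2 ≤ 1 := by
      rw [div_le_one (by nlinarith)]
      nlinarith
    linarith
  rw [euler_zw, zw, deriv_trans_high _ h, Real.smoothTransition.one_of_one_le h, defect]
  ring

lemma D_outer (s R r : ℝ) (hR : 0 < R) (hrR : 2 * R ≤ r) :
    (zw s R r + r * deriv (zw s R) r) ^ 2 - s ^ 2 * zw s R r ^ 2 = 0 := by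
  have h : (4 - r ^ 2 / R ^ 2) / 3 ≤ 0 := by
    have : 4 ≤ r ^ 2 / R ^ 2 := by
      rw [le_div_iff₀ (by positivity)]
      nlinarith
    linarith
  rw [euler_zw, zw, deriv_trans_low _ h, Real.smoothTransition.zero_of_nonpos h]
  ring

lemma D_mid (s R r M : ℝ) (hs : 1 ≤ s) (hM : ∀ y, |deriv Real.smoothTransition y| ≤ M)
    (hR : 0 < R) (h1 : R ≤ r) (h2 : r < 2 * R) :
    (zw s R r + r * deriv (zw s R) r) ^ 2 - s ^ 2 * zw s R r ^ 2
      ≤ (s + 3 * M) ^ 2 * R ^ (-(2 * s + 2)) := by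
  have hM0 : 0 ≤ M := (abs_nonneg _).trans (hM 0)
  have hq : qw s r ^ 2 ≤ R ^ (-(2 * s + 2)) := by
    rw [qw, ← Real.rpow_mul_natCast (by positivity)]
    calc (1 + r ^ 2) ^ (-(s + 1) / 2 * (2:ℕ)) ≤ (R ^ 2) ^ (-(s + 1) / 2 * (2:ℕ)) := by
          apply Real.rpow_le_rpow_of_nonpos (by positivity)
          · nlinarith
          · push_cast; linarith
      _ = R ^ (-(2 * s + 2)) := by
          rw [← Real.rpow_natCast_mul hR.le]
          congr 1
          push_cast; ring
  have hx4 : r ^ 2 / R ^ 2 ≤ 4 := by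
    rw [div_le_iff₀ (by positivity)]
    nlinarith
  have hx0 : 0 ≤ r ^ 2 / R ^ 2 := by positivity
  rw [euler_zw]
  set y := (4 - r ^ 2 / R ^ 2) / 3
  have hA : |(1 - s * r ^ 2) / (1 + r ^ 2) * Real.smoothTransition y
      - deriv Real.smoothTransition y * (2 * (r ^ 2 / R ^ 2) / 3)| ≤ s + 3 * M := by
    refine (abs_sub _ _).trans ?_
    have e1 : |(1 - s * r ^ 2) / (1 + r ^ 2) * Real.smoothTransition y| ≤ s * 1 := by
      rw [abs_mul]
      apply mul_le_mul (ratio_le s r hs) _ (abs_nonneg _) (by linarith)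
      rw [abs_of_nonneg (Real.smoothTransition.nonneg y)]
      exact Real.smoothTransition.le_one y
    have e2 : |deriv Real.smoothTransition y * (2 * (r ^ 2 / R ^ 2) / 3)| ≤ M * 3 := by
      rw [abs_mul]
      apply mul_le_mul (hM y) _ (abs_nonneg _) hM0
      rw [abs_of_nonneg (by positivity)]
      linarith
    linarith
  have hA2 := pow_le_pow_left₀ (abs_nonneg _) hA 2
  rw [sq_abs] at hA2
  have h3 : 0 ≤ s ^ 2 * zw s R r ^ 2 := by positivity
  rw [mul_pow]
  have h4 : qw s r ^ 2 * ((1 - s * r ^ 2) / (1 + r ^ 2) * Real.smoothTransition y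
      - deriv Real.smoothTransition y * (2 * (r ^ 2 / R ^ 2) / 3)) ^ 2
      ≤ R ^ (-(2 * s + 2)) * (s + 3 * M) ^ 2 := by gcongr
  linarith

lemma final1d (m : ℕ) (s : ℝ) (hs : 1 ≤ s) (W : ℝ → ℝ) (cW : Continuous W) (hW : ∀ r, 0 ≤ W r)
    (r₁ : ℝ) (hr₁ : 0 < r₁) (hW1 : 0 < W r₁)
    (H : ∀ R > 0, 0 ≤ ∫ r in Set.Ioi (0:ℝ), r ^ m * (W r *
      ((zw s R r + r * deriv (zw s R) r) ^ 2 - s ^ 2 * zw s R r ^ 2))) :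
    ∃ c > (0:ℝ), ∃ R₀ > (2:ℝ), ∀ R : ℝ, R₀ ≤ R →
      c * R ^ (2 * s + 2) ≤ ∫ r in Set.Ico R (2 * R), r ^ m * W r := by
  obtain ⟨M, hM0, hM⟩ := deriv_trans_bdd
  set C := (s + 3 * M) ^ 2 with hC
  have hCpos : 0 < C := by positivity
  set A := r₁ + 2 with hA
  have cd := continuous_defect s
  let I0 : ℝ → ℝ := fun r => r ^ m * (W r * defect s r)
  have cI0 : Continuous I0 := by fun_prop
  have hI0 : ∀ r, 0 < r → 0 ≤ I0 r := fun r hr => by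
    have := hW r
    have := defect_nonneg s r hs
    positivity
  have hc0 : 0 < ∫ r in (0:ℝ)..A, I0 r := by
    apply intervalIntegral.integral_pos (by linarith) cI0.continuousOn
    · intro r hr; exact hI0 r hr.1
    · refine ⟨r₁, ⟨by linarith, by linarith⟩, ?_⟩
      have := defect_pos s r₁ hs hr₁
      positivity
  rw [intervalIntegral.integral_of_le (by linarith)] at hc0
  set c0 := ∫ r in Set.Ioc (0:ℝ) A, I0 r
  refine ⟨c0 / C, by positivity, A + 1, by linarith, fun R hR => ?_⟩
  have hRpos : 0 < R := by linarith
  have h := H R hRpos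
  let K : ℝ := C * R ^ (-(2 * s + 2))
  have hK : 0 < K := mul_pos hCpos (Real.rpow_pos_of_pos hRpos _)
  let J : ℝ → ℝ := fun r => r ^ m * W r
  have cJ : Continuous J := by fun_prop
  have i1 : Integrable ((Set.Ioc (0:ℝ) A).indicator I0) := by
    rw [integrable_indicator_iff measurableSet_Ioc]
    exact (cI0.continuousOn.integrableOn_compact (isCompact_Icc (a := 0) (b := A))).mono_set
      Set.Ioc_subset_Icc_self
  have i2 : Integrable ((Set.Ico R (2 * R)).indicator J) := by
    rw [integrable_indicator_iff measurableSet_Ico]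
    exact (cJ.continuousOn.integrableOn_compact (isCompact_Icc (a := R) (b := 2 * R))).mono_set
      Set.Ico_subset_Icc_self
  have cz := (contDiff_zw s R).continuous
  have cz' : Continuous (deriv (zw s R)) := (contDiff_zw s R).continuous_deriv (by norm_num)
  have hle : ∫ r in Set.Ioi (0:ℝ), r ^ m * (W r *
      ((zw s R r + r * deriv (zw s R) r) ^ 2 - s ^ 2 * zw s R r ^ 2)) ≤
      ∫ r in Set.Ioi (0:ℝ), (K * (Set.Ico R (2 * R)).indicator J r
        - (Set.Ioc (0:ℝ) A).indicator I0 r) := by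
    apply setIntegral_mono_on _ ((i2.const_mul K).sub i1).integrableOn measurableSet_Ioi
    · intro r hr
      have hr : 0 < r := hr
      have hrm : 0 < r ^ m := by positivity
      have hWr := hW r
      change _ ≤ K * (Set.Ico R (2 * R)).indicator J r - (Set.Ioc (0:ℝ) A).indicator I0 r
      rcases lt_or_ge r R with h1 | h1
      · rw [D_inner s R r hr h1, Set.indicator_of_notMem (s := Set.Ico R (2 * R)) (fun hh => by linarith [hh.1])]
        have e : r ^ m * (W r * -defect s r) = - I0 r := by simp only [I0]; ring
        rw [e]
        have : (Set.Ioc (0:ℝ) A).indicator I0 r ≤ I0 r := by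
          by_cases hm : r ∈ Set.Ioc (0:ℝ) A
          · rw [Set.indicator_of_mem hm]
          · rw [Set.indicator_of_notMem hm]; exact hI0 r hr
        linarith
      · rw [Set.indicator_of_notMem (s := Set.Ioc (0:ℝ) A) (fun hh => by linarith [hh.2])]
        rcases lt_or_ge r (2 * R) with h2 | h2
        · rw [Set.indicator_of_mem (show r ∈ Set.Ico R (2 * R) from ⟨h1, h2⟩)]
          have := D_mid s R r M hs hM hRpos h1 h2
          have e : K * J r - 0 = r ^ m * (W r * K) := by simp only [J]; ring
          rw [e]
          gcongr
        · rw [D_outer s R r hRpos h2, Set.indicator_of_notMem (s := Set.Ico R (2 * R)) (fun hh => by linarith [hh.2])]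
          simp
    · apply integrableOn_aux _ (by fun_prop) (2 * R)
      intro r hr
      rw [D_outer s R r hRpos hr]
      simp
  rw [integral_sub (i2.const_mul K).integrableOn i1.integrableOn, integral_const_mul,
    setIntegral_indicator measurableSet_Ico, setIntegral_indicator measurableSet_Ioc,
    Set.inter_eq_right.mpr (show Set.Ico R (2 * R) ⊆ Set.Ioi 0 from
      fun r hr => lt_of_lt_of_le hRpos hr.1),
    Set.inter_eq_right.mpr (show Set.Ioc 0 A ⊆ Set.Ioi 0 from fun r hr => hr.1)] at hle
  change _ ≤ K * (∫ r in Set.Ico R (2 * R), r ^ m * W r) - c0 at hle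
  have h5 : c0 ≤ K * ∫ r in Set.Ico R (2 * R), r ^ m * W r := by linarith
  have hRs : R ^ (2 * s + 2) * R ^ (-(2 * s + 2)) = 1 := by
    rw [← Real.rpow_add hRpos]; simp
  have hRp : 0 < R ^ (2 * s + 2) := Real.rpow_pos_of_pos hRpos _
  calc c0 / C * R ^ (2 * s + 2)
      ≤ (K * ∫ r in Set.Ico R (2 * R), r ^ m * W r) / C * R ^ (2 * s + 2) := by gcongr
    _ = (R ^ (2 * s + 2) * R ^ (-(2 * s + 2))) * ∫ r in Set.Ico R (2 * R), r ^ m * W r := by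
        simp only [K]; field_simp
    _ = _ := by rw [hRs, one_mul]

/-- **Theorem (Lower bound for nonconstant radial stable solutions).**
Let `n ≥ 2`, `f ∈ C¹(ℝ)` and let `u` be a `W^{3,1}_loc(ℝⁿ)` stable solution of
`div(∇u/√(1+|∇u|²)) = -f(u)` in `ℝⁿ`, radially symmetric with respect to the origin.
If `u` is nonconstant, then there are `c > 0` and `R₀ > 2` with
`⨍_{B_{2R}∖B_R} |∇u|²/(1+|∇u|²)^{3/2} ≥ c R^{-n+2√(n-1)+2}` for all `R ≥ R₀`. -/
theorem stmt_6 (n : ℕ) (hn : 2 ≤ n) (f : ℝ → ℝ) (u : Euc n → ℝ) (g : ℝ → ℝ)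
    (hf : ContDiff ℝ 1 f)
    (hreg : ContDiff ℝ 3 u)
    (hstable : IsStableSolution (Set.univ : Set (Euc n)) f u)
    (hradial : ∀ x : Euc n, u x = g ‖x‖)
    (hnc : ¬ ∃ c₀ : ℝ, ∀ x : Euc n, u x = c₀) :
    ∃ c > (0:ℝ), ∃ R₀ > (2:ℝ), ∀ R : ℝ, R₀ ≤ R →
      c * R ^ (-(n:ℝ) + 2 * Real.sqrt ((n:ℝ) - 1) + 2) ≤
        ⨍ x in ball (0 : Euc n) (2*R) \ ball (0 : Euc n) R,
          ‖gradient u x‖ ^ 2 / (1 + ‖gradient u x‖ ^ 2) ^ ((3:ℝ)/2) := by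
  obtain ⟨v, hv, huv⟩ := exists_profile hn u g hreg hradial
  have hN : Nonempty (Fin n) := ⟨⟨0, by omega⟩⟩
  have hnR : (2:ℝ) ≤ n := by exact_mod_cast hn
  set s := Real.sqrt ((n:ℝ) - 1) with hs
  have hs2 : s ^ 2 = (n:ℝ) - 1 := Real.sq_sqrt (by linarith)
  have hs1 : 1 ≤ s := by
    rw [hs, Real.one_le_sqrt]; linarith
  set ω := (volume : Measure (Euc n)).real (ball 0 1) with hωdef
  have hω : 0 < ω :=
    ENNReal.toReal_pos (measure_ball_pos _ _ one_pos).ne' measure_ball_lt_top.ne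
  have cw := (contDiff_deriv_profile hv).continuous
  let W : ℝ → ℝ := fun r => deriv v r ^ 2 / (1 + deriv v r ^ 2) ^ ((3:ℝ)/2)
  have hpos : ∀ r, 0 < 1 + deriv v r ^ 2 := fun r => by positivity
  have hrp : ∀ r, 0 < (1 + deriv v r ^ 2) ^ ((3:ℝ)/2) := fun r => Real.rpow_pos_of_pos (hpos r) _
  have cW : Continuous W := by
    apply (cw.pow 2).div _ (fun r => (hrp r).ne')
    apply Continuous.rpow_const (by fun_prop)
    intro x; left; exact (hpos x).ne'
  have hW : ∀ r, 0 ≤ W r := fun r => div_nonneg (sq_nonneg _) (hrp r).le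
  obtain ⟨r₁, hr₁, hw₁⟩ : ∃ r₁ > 0, deriv v r₁ ≠ 0 := by
    by_contra hcon
    push Not at hcon
    apply hnc
    refine ⟨v 0, fun x => ?_⟩
    rw [huv]
    apply (convex_Ici (0:ℝ)).is_const_of_fderivWithin_eq_zero (𝕜 := ℝ) _ _ (norm_nonneg x) Set.self_mem_Ici
    · exact (hv.differentiable (by norm_num)).differentiableOn
    · intro r hr
      have hd0 : deriv v r = 0 := by
        rcases eq_or_lt_of_le (show 0 ≤ r from hr) with h0 | h0
        · have hcl : Set.EqOn (deriv v) (fun _ => 0) (closure (Set.Ioi 0)) :=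
            Set.EqOn.closure (fun r hr => hcon r hr) cw continuous_const
          exact hcl (by rw [closure_Ioi]; exact hr)
        · exact hcon r h0
      have hd := (hv.differentiable (by norm_num) r).hasDerivAt
      rw [hd0] at hd
      have h2 := hd.hasDerivWithinAt.hasFDerivWithinAt (s := Set.Ici 0)
      rw [h2.fderivWithin (uniqueDiffOn_Ici 0 r hr)]
      ext
      simp
  have hW1 : 0 < W r₁ := div_pos (by positivity) (hrp r₁)
  obtain ⟨c, hc, R₀, hR₀, hfin⟩ := final1d (n - 1) s hs1 W cW hW r₁ hr₁ hW1 (by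
    intro R hR
    have := radial_stab hn f u v (zw s R) hf hreg hv huv hstable (contDiff_zw s R)
      (contDiff_aux s R) (2 * R) (fun r hr => zw_eq_zero s R r hR hr)
    rw [hs2]
    exact this)
  have h2n : (1:ℝ) < 2 ^ n := one_lt_pow₀ (by norm_num) (by omega)
  have h2n' : (0:ℝ) < 2 ^ n - 1 := by linarith
  refine ⟨n * c / (2 ^ n - 1), by positivity, R₀, hR₀, fun R hR => ?_⟩
  have hRpos : 0 < R := by linarith
  have hvol : (volume : Measure (Euc n)).real (ball (0 : Euc n) (2*R) \ ball (0 : Euc n) R)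
      = ω * ((2 ^ n - 1) * R ^ n) := by
    have hb : ∀ t : ℝ, 0 < t → (volume : Measure (Euc n)).real (ball (0 : Euc n) t) = t ^ n * ω := by
      intro t ht
      rw [measureReal_def, Measure.addHaar_ball_of_pos _ _ ht, ENNReal.toReal_mul,
        ENNReal.toReal_ofReal (by positivity), hωdef, measureReal_def]
      simp
    rw [measureReal_diff (ball_subset_ball (by linarith)) measurableSet_ball, hb _ (by positivity), hb _ hRpos]
    rw [mul_pow]; ring
  have hint : ∫ x in ball (0 : Euc n) (2*R) \ ball (0 : Euc n) R,
      ‖gradient u x‖ ^ 2 / (1 + ‖gradient u x‖ ^ 2) ^ ((3:ℝ)/2)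
      = n * ω * ∫ r in Set.Ico R (2 * R), r ^ (n - 1) * W r := by
    rw [← integral_indicator (measurableSet_ball.diff measurableSet_ball)]
    rw [polar_int hn _ ((Set.Ico R (2 * R)).indicator W)]
    · congr 1
      have : ∀ r, r ^ (n - 1) * (Set.Ico R (2 * R)).indicator W r
          = (Set.Ico R (2 * R)).indicator (fun r => r ^ (n - 1) * W r) r := by
        intro r
        by_cases hr : r ∈ Set.Ico R (2 * R)
        · simp [Set.indicator_of_mem hr]
        · simp [Set.indicator_of_notMem hr]
      simp only [this]
      rw [setIntegral_indicator measurableSet_Ico,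
        Set.inter_eq_right.mpr (show Set.Ico R (2 * R) ⊆ Set.Ioi 0 from
          fun r hr => lt_of_lt_of_le hRpos hr.1)]
    · intro x hx
      have hmem : x ∈ ball (0 : Euc n) (2*R) \ ball (0 : Euc n) R ↔ ‖x‖ ∈ Set.Ico R (2 * R) := by
        simp [and_comm]
      by_cases hxm : ‖x‖ ∈ Set.Ico R (2 * R)
      · rw [Set.indicator_of_mem hxm, Set.indicator_of_mem (hmem.mpr hxm),
          grad_radial v u huv x hx _ ((hv.differentiable (by norm_num) _).hasDerivAt),
          normsq_radial x hx]
      · rw [Set.indicator_of_notMem hxm, Set.indicator_of_notMem (fun h => hxm (hmem.mp h))]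
  rw [setAverage_eq, hvol, hint, smul_eq_mul]
  have h1 := hfin R hR
  have hpow : R ^ (-(n:ℝ) + 2 * s + 2) = R ^ (2 * s + 2) / R ^ n := by
    rw [← Real.rpow_natCast R n, ← Real.rpow_sub hRpos]
    congr 1
    ring
  rw [hpow]
  have hRn : 0 < R ^ n := by positivity
  calc n * c / (2 ^ n - 1) * (R ^ (2 * s + 2) / R ^ n)
      = (ω * ((2 ^ n - 1) * R ^ n))⁻¹ * (n * ω * (c * R ^ (2 * s + 2))) := by
        field_simp
    _ ≤ _ := by gcongr
end
end

section
/- Let 2 ≤ n ≤ 6, f ∈ C¹(ℝ), and let u be a W^{3,1}_loc(ℝⁿ) stable solution of div(∇u/√(1+|∇u|²)) = −f(u) in ℝⁿ which is radially symmetric with respect to the origin. Then u is constant. In other words, in dimensions 2 ≤ n ≤ 6 there exist no nonconstant radial stable solutions of the mean curvature equation, without any growth assumption at infinity. -/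
open MeasureTheory Metric Real Filter Asymptotics Bornology
open scoped RealInnerProductSpace Topology

noncomputable section

/-- Polynomial approximation in `C¹([a,b])`. -/
lemma approx_C1_s7 (p : ℝ → ℝ) (hp : ContDiff ℝ 1 p) (a b : ℝ) (hab : a < b) (ε : ℝ) (hε : 0 < ε) :
    ∃ q : ℝ → ℝ, ContDiff ℝ (⊤ : ℕ∞) q ∧ ∀ r ∈ Set.Icc a b,
      |q r - p r| ≤ ε * (b - a) ∧ |deriv q r - deriv p r| ≤ ε := by
  have hp' : Continuous (deriv p) := hp.continuous_deriv le_rfl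
  obtain ⟨P, hP⟩ := exists_polynomial_near_of_continuousOn a b (deriv p) hp'.continuousOn ε hε
  have hPc : Continuous (fun x => P.eval x) := P.continuous
  have hder : ∀ r, HasDerivAt (fun r => p a + ∫ t in a..r, P.eval t) (P.eval r) r := by
    intro r
    exact (intervalIntegral.integral_hasDerivAt_right (hPc.intervalIntegrable _ _)
      hPc.stronglyMeasurable.stronglyMeasurableAtFilter hPc.continuousAt).const_add _
  refine ⟨fun r => p a + ∫ t in a..r, P.eval t, ?_, ?_⟩
  · rw [contDiff_infty_iff_deriv]
    refine ⟨fun r => (hder r).differentiableAt, ?_⟩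
    rw [show deriv (fun r => p a + ∫ t in a..r, P.eval t) = fun r => P.eval r from
      funext fun r => (hder r).deriv]
    simpa using P.contDiff_aeval (𝕜 := ℝ) (⊤ : ℕ∞)
  · intro r hr
    constructor
    · have h1 : ∫ t in a..r, deriv p t = p r - p a :=
        intervalIntegral.integral_deriv_eq_sub (fun x _ => (hp.differentiable one_ne_zero) x)
          (hp'.intervalIntegrable _ _)
      have h2 : p a + (∫ t in a..r, P.eval t) - p r = ∫ t in a..r, (P.eval t - deriv p t) := by
        rw [intervalIntegral.integral_sub (hPc.intervalIntegrable _ _) (hp'.intervalIntegrable _ _),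
          h1]; ring
      simp only [h2]
      have h3 : ‖∫ t in a..r, (P.eval t - deriv p t)‖ ≤ ε * |r - a| := by
        apply intervalIntegral.norm_integral_le_of_norm_le_const
        intro x hx
        rw [Set.uIoc_of_le hr.1] at hx
        exact (hP x ⟨hx.1.le, hx.2.trans hr.2⟩).le
      rw [Real.norm_eq_abs, abs_of_nonneg (sub_nonneg.2 hr.1)] at h3
      have := hr.2
      exact h3.trans (by gcongr)
    · rw [(hder r).deriv]
      exact (hP r hr).le

/-- Limits of quadratic integrals. -/
lemma tendsto_quad (a b : ℝ) (hab : a < b) (w e1 e2 x y : ℝ → ℝ) (xs ys : ℕ → ℝ → ℝ)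
    (hw : ContinuousOn w (Set.Icc a b)) (he1 : ContinuousOn e1 (Set.Icc a b))
    (he2 : ContinuousOn e2 (Set.Icc a b))
    (hx : Continuous x) (hy : Continuous y)
    (hxs : ∀ j, Continuous (xs j)) (hys : ∀ j, Continuous (ys j))
    (h1 : ∀ j : ℕ, ∀ r ∈ Set.Icc a b, |xs j r - x r| ≤ 1 / ((j : ℝ) + 1) * (b - a))
    (h2 : ∀ j : ℕ, ∀ r ∈ Set.Icc a b, |ys j r - y r| ≤ 1 / ((j : ℝ) + 1)) :
    Tendsto (fun j => ∫ r in a..b, w r * (e1 r * xs j r + e2 r * ys j r) ^ 2) atTop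
      (𝓝 (∫ r in a..b, w r * (e1 r * x r + e2 r * y r) ^ 2)) := by
  have hu : Set.uIoc a b = Set.Ioc a b := Set.uIoc_of_le hab.le
  have hu' : Set.uIcc a b = Set.Icc a b := Set.uIcc_of_le hab.le
  have hj : ∀ j : ℕ, 1 / ((j : ℝ) + 1) ≤ 1 := fun j => by
    rw [div_le_one (by positivity)]; linarith [(Nat.cast_nonneg j : (0:ℝ) ≤ j)]
  apply intervalIntegral.tendsto_integral_filter_of_dominated_convergence
    (fun r => |w r| * (|e1 r| * (|x r| + (b - a)) + |e2 r| * (|y r| + 1)) ^ 2)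
  · refine Eventually.of_forall fun j => ?_
    rw [hu]
    refine ContinuousOn.aestronglyMeasurable ?_ measurableSet_Ioc
    have := hxs j
    have := hys j
    have : ContinuousOn (fun r => w r * (e1 r * xs j r + e2 r * ys j r) ^ 2) (Set.Icc a b) := by
      fun_prop
    exact this.mono Set.Ioc_subset_Icc_self
  · refine Eventually.of_forall fun j => Eventually.of_forall fun r hr => ?_
    rw [hu] at hr
    have hr' := Set.Ioc_subset_Icc_self hr
    have a1 : |xs j r| ≤ |x r| + (b - a) := by
      have := h1 j r hr'
      have h3 : 1 / ((j : ℝ) + 1) * (b - a) ≤ 1 * (b - a) :=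
        mul_le_mul_of_nonneg_right (hj j) (by linarith)
      have := abs_sub_abs_le_abs_sub (xs j r) (x r)
      linarith
    have a2 : |ys j r| ≤ |y r| + 1 := by
      have := h2 j r hr'
      have := hj j
      have := abs_sub_abs_le_abs_sub (ys j r) (y r)
      linarith
    rw [Real.norm_eq_abs, abs_mul, abs_pow]
    have : |e1 r * xs j r + e2 r * ys j r| ≤
        |e1 r| * (|x r| + (b - a)) + |e2 r| * (|y r| + 1) := by
      refine (abs_add_le _ _).trans ?_
      rw [abs_mul, abs_mul]
      gcongr
    gcongr
  · apply ContinuousOn.intervalIntegrable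
    rw [hu']
    have := hw.abs
    have := he1.abs
    have := he2.abs
    fun_prop
  · refine Eventually.of_forall fun r hr => ?_
    rw [hu] at hr
    have hr' := Set.Ioc_subset_Icc_self hr
    have t0 : Tendsto (fun j : ℕ => 1 / ((j : ℝ) + 1)) atTop (𝓝 0) :=
      tendsto_one_div_add_atTop_nhds_zero_nat
    have t1 : Tendsto (fun j => xs j r) atTop (𝓝 (x r)) := by
      rw [tendsto_iff_norm_sub_tendsto_zero]
      refine squeeze_zero (fun _ => norm_nonneg _) (fun j => h1 j r hr') ?_
      simpa using t0.mul_const (b - a)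
    have t2 : Tendsto (fun j => ys j r) atTop (𝓝 (y r)) := by
      rw [tendsto_iff_norm_sub_tendsto_zero]
      exact squeeze_zero (fun _ => norm_nonneg _) (fun j => h2 j r hr') t0
    exact (((t1.const_mul _).add (t2.const_mul _)).pow 2).const_mul _

/-- One dimensional stability inequality. -/
def Stab1 (m : ℕ) (p φ : ℝ → ℝ) : Prop :=
  ∀ (a b : ℝ) (ζ : ℝ → ℝ), 0 < a → a < b → ContDiffOn ℝ (⊤ : ℕ∞) ζ (Set.Ioi 0) →
    (∀ r, 0 ≤ r → r ∉ Set.Icc a b → ζ r = 0) →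
    ∫ r in a..b, r ^ (m + 1) * (φ r * ζ r ^ 2) ≤
      ∫ r in a..b, r ^ (m + 1) * (deriv ζ r ^ 2 / ((1 + p r ^ 2) * √(1 + p r ^ 2)))

lemma stab_C1_s7 (m : ℕ) (p φ : ℝ → ℝ) (hp : ContDiff ℝ 1 p) (hφ : Continuous φ)
    (hS : Stab1 m p φ) (a b : ℝ) (η : ℝ → ℝ) (ha : 0 < a) (hab : a < b)
    (hη : ContDiffOn ℝ (⊤ : ℕ∞) η (Set.Ioi 0))
    (hη0 : ∀ r, 0 ≤ r → r ∉ Set.Icc a b → η r = 0) :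
    ∫ r in a..b, r ^ (m + 1) * φ r * (η r * p r) ^ 2 ≤
      ∫ r in a..b, r ^ (m + 1) / ((1 + p r ^ 2) * √(1 + p r ^ 2)) *
        (deriv η r * p r + η r * deriv p r) ^ 2 := by
  have hpc := hp.continuous
  have hp' : Continuous (deriv p) := hp.continuous_deriv le_rfl
  have hsub : Set.Icc a b ⊆ Set.Ioi 0 := fun r hr => lt_of_lt_of_le ha hr.1
  have hηc : ContinuousOn η (Set.Icc a b) := hη.continuousOn.mono hsub
  have hη'c : ContinuousOn (deriv η) (Set.Icc a b) :=
    (hη.continuousOn_deriv_of_isOpen isOpen_Ioi (by simp)).mono hsub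
  have hdη : ∀ r, 0 < r → DifferentiableAt ℝ η r := fun r hr =>
    (hη.differentiableOn (by simp)).differentiableAt (isOpen_Ioi.mem_nhds hr)
  choose q hq hq' using fun j : ℕ =>
    approx_C1_s7 p hp a b hab (1 / ((j : ℝ) + 1)) (by positivity)
  have hqd : ∀ j, Continuous (deriv (q j)) := fun j => (hq j).continuous_deriv (by simp)
  have hs : ∀ r, (1 + p r ^ 2) * √(1 + p r ^ 2) ≠ 0 := fun r => by positivity
  have hw : ContinuousOn (fun r => r ^ (m + 1) / ((1 + p r ^ 2) * √(1 + p r ^ 2)))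
      (Set.Icc a b) := by
    apply Continuous.continuousOn
    apply Continuous.div (by fun_prop) (by fun_prop) hs
  have L := tendsto_quad a b hab (fun r => r ^ (m + 1) * φ r) η (fun _ => 0) p (deriv p) q
    (fun j => deriv (q j)) (by fun_prop) hηc (by fun_prop) hpc hp' (fun j => (hq j).continuous)
    hqd (fun j r hr => (hq' j r hr).1) (fun j r hr => (hq' j r hr).2)
  have R := tendsto_quad a b hab _ (deriv η) η p (deriv p) q
    (fun j => deriv (q j)) hw hη'c hηc hpc hp' (fun j => (hq j).continuous)
    hqd (fun j r hr => (hq' j r hr).1) (fun j r hr => (hq' j r hr).2)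
  simp only [zero_mul, add_zero] at L
  refine le_of_tendsto_of_tendsto' L R fun j => ?_
  have := hS a b (fun r => η r * q j r) ha hab (hη.mul (hq j).contDiffOn)
    (fun r hr hr' => by simp [hη0 r hr hr'])
  have e1 : ∫ r in a..b, r ^ (m + 1) * φ r * (η r * q j r) ^ 2 =
      ∫ r in a..b, r ^ (m + 1) * (φ r * (η r * q j r) ^ 2) := by
    simp only [mul_assoc]
  rw [e1]
  refine this.trans (le_of_eq ?_)
  apply intervalIntegral.integral_congr
  intro r hr
  rw [Set.uIcc_of_le hab.le] at hr
  have hd : deriv (fun r => η r * q j r) r = deriv η r * q j r + η r * deriv (q j) r :=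
    ((hdη r (hsub hr)).hasDerivAt.mul
      (((hq j).differentiable (by simp)) r).hasDerivAt).deriv
  simp only [hd]
  ring

lemma stab_C2 (m : ℕ) (p φ : ℝ → ℝ) (hp : ContDiff ℝ 1 p) (hφ : Continuous φ)
    (hS : Stab1 m p φ)
    (hD : ∀ r, 0 < r → HasDerivAt
      (fun r => r ^ (m + 1) * (deriv p r / ((1 + p r ^ 2) * √(1 + p r ^ 2))))
      ((m + 1) * r ^ (m + 1) / r ^ 2 * (p r / √(1 + p r ^ 2)) - r ^ (m + 1) * φ r * p r) r)
    (a b : ℝ) (η : ℝ → ℝ) (ha : 0 < a) (hab : a < b)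
    (hη : ContDiffOn ℝ (⊤ : ℕ∞) η (Set.Ioi 0))
    (hη0 : ∀ r, 0 ≤ r → r ∉ Set.Ioo a b → η r = 0) :
    ∫ r in a..b, (m + 1) * r ^ (m + 1) / r ^ 2 * (p r ^ 2 / √(1 + p r ^ 2)) * η r ^ 2 ≤
      ∫ r in a..b, r ^ (m + 1) / ((1 + p r ^ 2) * √(1 + p r ^ 2)) * p r ^ 2 * deriv η r ^ 2 := by
  have h := stab_C1_s7 m p φ hp hφ hS a b η ha hab hη
    (fun r hr hr' => hη0 r hr fun h => hr' (Set.Ioo_subset_Icc_self h))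
  have hpc := hp.continuous
  have hp' : Continuous (deriv p) := hp.continuous_deriv le_rfl
  have hsub : Set.Icc a b ⊆ Set.Ioi 0 := fun r hr => lt_of_lt_of_le ha hr.1
  have hηc : ContinuousOn η (Set.Icc a b) := hη.continuousOn.mono hsub
  have hη'c : ContinuousOn (deriv η) (Set.Icc a b) :=
    (hη.continuousOn_deriv_of_isOpen isOpen_Ioi (by simp)).mono hsub
  have hdη : ∀ r, 0 < r → DifferentiableAt ℝ η r := fun r hr =>
    (hη.differentiableOn (by simp)).differentiableAt (isOpen_Ioi.mem_nhds hr)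
  have hs : ∀ r, (1 + p r ^ 2) * √(1 + p r ^ 2) ≠ 0 := fun r => by positivity
  have hs' : ∀ r, √(1 + p r ^ 2) ≠ 0 := fun r => by positivity
  have hsc : Continuous fun r => 1 / ((1 + p r ^ 2) * √(1 + p r ^ 2)) :=
    Continuous.div (by fun_prop) (by fun_prop) hs
  have hsc' : Continuous fun r => 1 / √(1 + p r ^ 2) :=
    Continuous.div (by fun_prop) (by fun_prop) hs'
  have hrc : ContinuousOn (fun r : ℝ => 1 / r ^ 2) (Set.Icc a b) :=
    ContinuousOn.div (by fun_prop) (by fun_prop) (fun r hr => by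
      have : 0 < r := hsub hr
      positivity)
  have hu' : Set.uIcc a b = Set.Icc a b := Set.uIcc_of_le hab.le
  -- the total derivative
  set T : ℝ → ℝ := fun r => r ^ (m + 1) * (deriv p r / ((1 + p r ^ 2) * √(1 + p r ^ 2))) *
    (p r * η r ^ 2) with hT
  set T' : ℝ → ℝ := fun r => ((m + 1) * r ^ (m + 1) / r ^ 2 * (p r / √(1 + p r ^ 2))
      - r ^ (m + 1) * φ r * p r) * (p r * η r ^ 2) +
      r ^ (m + 1) * (deriv p r / ((1 + p r ^ 2) * √(1 + p r ^ 2))) *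
      (deriv p r * η r ^ 2 + p r * (2 * η r * deriv η r)) with hT'
  have hTd : ∀ r ∈ Set.uIcc a b, HasDerivAt T (T' r) r := by
    intro r hr
    rw [hu'] at hr
    have h0 : 0 < r := hsub hr
    have := (hD r h0).mul (((hp.differentiable one_ne_zero) r).hasDerivAt.mul
      ((hdη r h0).hasDerivAt.pow 2))
    exact HasDerivAt.congr_deriv this (by simp [hT'])
  have hi1 : ContinuousOn (fun r => r ^ (m + 1) * φ r * (η r * p r) ^ 2) (Set.Icc a b) := by
    fun_prop
  have hi2 : ContinuousOn (fun r => r ^ (m + 1) / ((1 + p r ^ 2) * √(1 + p r ^ 2)) *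
        (deriv η r * p r + η r * deriv p r) ^ 2) (Set.Icc a b) := by
    have : ContinuousOn (fun r => r ^ (m + 1) * (1 / ((1 + p r ^ 2) * √(1 + p r ^ 2))) *
        (deriv η r * p r + η r * deriv p r) ^ 2) (Set.Icc a b) := by fun_prop
    refine this.congr fun r hr => ?_
    simp only
    ring
  have hi3 : ContinuousOn (fun r => (m + 1) * r ^ (m + 1) / r ^ 2 *
      (p r ^ 2 / √(1 + p r ^ 2)) * η r ^ 2) (Set.Icc a b) := by
    have : ContinuousOn (fun r => (m + 1) * r ^ (m + 1) * (1 / r ^ 2) *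
      (p r ^ 2 * (1 / √(1 + p r ^ 2))) * η r ^ 2) (Set.Icc a b) := by fun_prop
    refine this.congr fun r hr => ?_
    simp only
    ring
  have hi4 : ContinuousOn (fun r => r ^ (m + 1) / ((1 + p r ^ 2) * √(1 + p r ^ 2)) *
      p r ^ 2 * deriv η r ^ 2) (Set.Icc a b) := by
    have : ContinuousOn (fun r => r ^ (m + 1) * (1 / ((1 + p r ^ 2) * √(1 + p r ^ 2))) *
      p r ^ 2 * deriv η r ^ 2) (Set.Icc a b) := by fun_prop
    refine this.congr fun r hr => ?_
    simp only
    ring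
  have hid : ∀ r, T' r = (fun r => (m + 1) * r ^ (m + 1) / r ^ 2 *
      (p r ^ 2 / √(1 + p r ^ 2)) * η r ^ 2) r - r ^ (m + 1) * φ r * (η r * p r) ^ 2 +
      (r ^ (m + 1) / ((1 + p r ^ 2) * √(1 + p r ^ 2)) *
        (deriv η r * p r + η r * deriv p r) ^ 2 -
       r ^ (m + 1) / ((1 + p r ^ 2) * √(1 + p r ^ 2)) * p r ^ 2 * deriv η r ^ 2) := by
    intro r
    simp only [hT']
    ring
  rw [← hu'] at hi1 hi2 hi3 hi4
  replace hi1 := hi1.intervalIntegrable (μ := volume)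
  replace hi2 := hi2.intervalIntegrable (μ := volume)
  replace hi3 := hi3.intervalIntegrable (μ := volume)
  replace hi4 := hi4.intervalIntegrable (μ := volume)
  have hT'i : IntervalIntegrable T' volume a b := by
    rw [show T' = _ from funext hid]
    exact (hi3.sub hi1).add (hi2.sub hi4)
  have key := intervalIntegral.integral_eq_sub_of_hasDerivAt hTd hT'i
  have ea : η a = 0 := hη0 a ha.le (by simp)
  have eb : η b = 0 := hη0 b (ha.trans hab).le (by simp)
  have ez : T b - T a = 0 := by simp [hT, ea, eb]
  rw [ez, show T' = _ from funext hid, intervalIntegral.integral_add (hi3.sub hi1) (hi2.sub hi4),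
    intervalIntegral.integral_sub hi3 hi1, intervalIntegral.integral_sub hi2 hi4] at key
  linarith

lemma p_lin_bound (p : ℝ → ℝ) (hp : ContDiff ℝ 1 p) (hp0 : p 0 = 0) :
    ∃ C : ℝ, 0 ≤ C ∧ ∀ r ∈ Set.Icc (0:ℝ) 1, |p r| ≤ C * r := by
  have hp' : Continuous (deriv p) := hp.continuous_deriv le_rfl
  obtain ⟨C, hC⟩ := (isCompact_Icc (a := (0:ℝ)) (b := 1)).exists_bound_of_continuousOn
    hp'.continuousOn
  refine ⟨C, (norm_nonneg _).trans (hC 0 (by simp)), fun r hr => ?_⟩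
  have := (convex_Icc (0:ℝ) 1).norm_image_sub_le_of_norm_deriv_le
    (fun x _ => (hp.differentiable one_ne_zero) x) hC (by simp : (0:ℝ) ∈ Set.Icc (0:ℝ) 1) hr
  simpa [hp0, abs_of_nonneg hr.1] using this

lemma quot_le_one (x : ℝ) : x ^ 2 / ((1 + x ^ 2) * √(1 + x ^ 2)) ≤ 1 := by
  have h1 : 1 ≤ √(1 + x ^ 2) := Real.one_le_sqrt.2 (by nlinarith [sq_nonneg x])
  rw [div_le_one (by positivity)]
  nlinarith [sq_nonneg x]

lemma quot_le_sq (x : ℝ) : x ^ 2 / ((1 + x ^ 2) * √(1 + x ^ 2)) ≤ x ^ 2 := by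
  have h1 : 1 ≤ √(1 + x ^ 2) := Real.one_le_sqrt.2 (by nlinarith [sq_nonneg x])
  apply div_le_self (sq_nonneg x)
  nlinarith [sq_nonneg x]

lemma M_integrable (p : ℝ → ℝ) (hp : ContDiff ℝ 1 p) (hp0 : p 0 = 0) :
    IntegrableOn (fun r : ℝ => r ^ (-(6/5) : ℝ) * (p r ^ 2 / ((1 + p r ^ 2) * √(1 + p r ^ 2))))
      (Set.Ioi 0) := by
  have hpc := hp.continuous
  have hs : ∀ r, (1 + p r ^ 2) * √(1 + p r ^ 2) ≠ 0 := fun r => by positivity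
  have hc : ContinuousOn (fun r : ℝ => r ^ (-(6/5) : ℝ) *
      (p r ^ 2 / ((1 + p r ^ 2) * √(1 + p r ^ 2)))) (Set.Ioi 0) := by
    apply ContinuousOn.mul
    · exact continuousOn_id.rpow_const fun x hx => Or.inl (ne_of_gt hx)
    · exact (Continuous.div (by fun_prop) (by fun_prop) hs).continuousOn
  obtain ⟨C, hC0, hC⟩ := p_lin_bound p hp hp0
  rw [← Set.Ioc_union_Ioi_eq_Ioi (zero_le_one : (0:ℝ) ≤ 1)]
  apply IntegrableOn.union
  · refine IntegrableOn.of_bound (by simp)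
      ((hc.mono fun r hr => hr.1).aestronglyMeasurable measurableSet_Ioc) (C ^ 2) ?_
    · refine (ae_restrict_iff' measurableSet_Ioc).2 (Eventually.of_forall fun r hr => ?_)
      have hr0 : 0 < r := hr.1
      have h1 : |p r| ≤ C * r := hC r ⟨hr0.le, hr.2⟩
      have h2 : p r ^ 2 ≤ C ^ 2 * r ^ 2 := by
        rw [← sq_abs, ← mul_pow]; gcongr
      have h3 : r ^ (-(6/5) : ℝ) * r ^ 2 ≤ 1 := by
        rw [← Real.rpow_natCast r 2, ← Real.rpow_add hr0]
        apply Real.rpow_le_one hr0.le hr.2 (by norm_num)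
      have h4 : 0 ≤ r ^ (-(6/5) : ℝ) := by positivity
      rw [Real.norm_eq_abs, abs_of_nonneg (by positivity)]
      calc r ^ (-(6/5) : ℝ) * (p r ^ 2 / ((1 + p r ^ 2) * √(1 + p r ^ 2)))
          ≤ r ^ (-(6/5) : ℝ) * (C ^ 2 * r ^ 2) := by
            gcongr
            exact (quot_le_sq _).trans h2
        _ = C ^ 2 * (r ^ (-(6/5) : ℝ) * r ^ 2) := by ring
        _ ≤ C ^ 2 * 1 := by gcongr
        _ = C ^ 2 := by ring
  · have hi : IntegrableOn (fun r : ℝ => r ^ (-(6/5) : ℝ)) (Set.Ioi 1) :=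
      integrableOn_Ioi_rpow_of_lt (by norm_num) one_pos
    have hsub1 : Set.Ioi (1:ℝ) ⊆ Set.Ioi 0 := Set.Ioi_subset_Ioi zero_le_one
    refine Integrable.mono' hi ((hc.mono hsub1).aestronglyMeasurable measurableSet_Ioi) ?_
    refine (ae_restrict_iff' measurableSet_Ioi).2 (Eventually.of_forall fun r hr => ?_)
    have hr0 : 0 < r := lt_trans one_pos hr
    rw [Real.norm_eq_abs, abs_of_nonneg (by positivity)]
    have := quot_le_one (p r)
    have h4 : 0 ≤ r ^ (-(6/5) : ℝ) := by positivity
    nlinarith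

lemma exists_bump : ∃ θ : ℝ → ℝ, ContDiff ℝ (⊤ : ℕ∞) θ ∧ HasCompactSupport θ ∧
    (∀ t, 0 ≤ θ t) ∧ (∀ t, θ t ≤ 1) ∧ (∀ t, |t| ≤ 1 → θ t = 1) ∧ (∀ t, 2 ≤ |t| → θ t = 0) := by
  let θ : ContDiffBump (0:ℝ) := ⟨1, 2, one_pos, one_lt_two⟩
  refine ⟨θ, θ.contDiff, θ.hasCompactSupport, fun _ => θ.nonneg, fun _ => θ.le_one, ?_, ?_⟩
  · intro t ht
    apply θ.one_of_mem_closedBall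
    rw [mem_closedBall, Real.dist_eq, sub_zero]
    exact ht
  · intro t ht
    apply θ.zero_of_le_dist
    rw [Real.dist_eq, sub_zero]
    exact ht

set_option maxHeartbeats 1000000 in
lemma core (m : ℕ) (hm : m ≤ 4) (p φ : ℝ → ℝ) (hp : ContDiff ℝ 1 p) (hp0 : p 0 = 0)
    (hφ : Continuous φ) (hS : Stab1 m p φ)
    (hD : ∀ r, 0 < r → HasDerivAt
      (fun r => r ^ (m + 1) * (deriv p r / ((1 + p r ^ 2) * √(1 + p r ^ 2))))
      ((m + 1) * r ^ (m + 1) / r ^ 2 * (p r / √(1 + p r ^ 2)) - r ^ (m + 1) * φ r * p r) r) :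
    ∀ r, 0 < r → p r = 0 := by
  have hpc := hp.continuous
  have hs : ∀ r, (1 + p r ^ 2) * √(1 + p r ^ 2) ≠ 0 := fun r => by positivity
  obtain ⟨M, hM⟩ : ∃ M : ℝ → ℝ, M = fun r => r ^ (-(6/5) : ℝ) *
    (p r ^ 2 / ((1 + p r ^ 2) * √(1 + p r ^ 2))) := ⟨_, rfl⟩
  have hMi : IntegrableOn M (Set.Ioi 0) := by rw [hM]; exact M_integrable p hp hp0
  have hMc : ContinuousOn M (Set.Ioi 0) := by
    rw [hM]
    apply ContinuousOn.mul
    · exact continuousOn_id.rpow_const fun x hx => Or.inl (ne_of_gt hx)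
    · exact (Continuous.div (by fun_prop) (by fun_prop) hs).continuousOn
  have hM0 : ∀ r, 0 < r → 0 ≤ M r := fun r hr => by simp only [hM]; positivity
  set K : ℝ := ∫ r in Set.Ioi 0, M r with hK
  have hMii : ∀ a b : ℝ, 0 < a → a < b → IntervalIntegrable M volume a b := fun a b ha hab => by
    apply ContinuousOn.intervalIntegrable
    rw [Set.uIcc_of_le hab.le]
    exact hMc.mono fun r hr => lt_of_lt_of_le ha hr.1
  have hMK : ∀ a b : ℝ, 0 < a → a < b → ∫ r in a..b, M r ≤ K := fun a b ha hab => by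
    rw [intervalIntegral.integral_of_le hab.le]
    apply setIntegral_mono_set hMi
    · exact (ae_restrict_iff' measurableSet_Ioi).2 (Eventually.of_forall hM0)
    · have hsub1 : Set.Ioc a b ⊆ Set.Ioi 0 := fun r hr => lt_trans ha hr.1
      exact hsub1.eventuallyLE
  have hK0 : 0 ≤ K := setIntegral_nonneg measurableSet_Ioi hM0
  -- the cutoff
  obtain ⟨θ, hθs, hθcs, hθ0, hθ1, hθone, hθzero⟩ := exists_bump
  have hθ'c : Continuous (deriv θ) := hθs.continuous_deriv (by simp)
  obtain ⟨C, hC⟩ := hθcs.deriv.exists_bound_of_continuous hθ'c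
  have hC0 : 0 ≤ C := (norm_nonneg _).trans (hC 0)
  set α : ℝ := m / 2 + 1 / 10 with hα
  have hα0 : 0 < α := by positivity
  have hm4 : (m : ℝ) ≤ 4 := by exact_mod_cast hm
  have hm0 : (0 : ℝ) ≤ m := Nat.cast_nonneg m
  have hgap : 0 < (m + 1 : ℝ) - α ^ 2 := by rw [hα]; nlinarith
  -- main estimate
  have main : ∀ k : ℝ, 1 ≤ k → ∀ a b : ℝ, 0 < a → a < b → |Real.log a| ≤ k → |Real.log b| ≤ k →
      ((m + 1 : ℝ) - α ^ 2) * ∫ r in a..b, M r ≤ (2 * α * C + C ^ 2) * K / k := by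
    intro k hk a b ha hab hla hlb
    have hk0 : 0 < k := by linarith
    set A := Real.exp (-(2 * k)) with hA
    set B := Real.exp (2 * k) with hB
    have hA0 : 0 < A := Real.exp_pos _
    have hAB : A < B := Real.exp_lt_exp.2 (by linarith)
    have hAa : A ≤ a := by
      rw [hA, ← Real.le_log_iff_exp_le ha]; linarith [neg_abs_le (Real.log a)]
    have hbB : b ≤ B := by
      rw [hB, ← Real.log_le_iff_le_exp (ha.trans hab)]; linarith [le_abs_self (Real.log b)]
    set η : ℝ → ℝ := fun r => r ^ (-α) * θ (Real.log r / k) with hη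
    have hηs : ContDiffOn ℝ (⊤ : ℕ∞) η (Set.Ioi 0) := by
      intro r hr
      have hr0 : r ≠ 0 := ne_of_gt hr
      apply ContDiffAt.contDiffWithinAt
      apply ContDiffAt.mul
      · exact Real.contDiffAt_rpow_const_of_ne hr0
      · exact hθs.contDiffAt.comp r ((Real.contDiffAt_log.2 hr0).div_const k)
    have hη0 : ∀ r, 0 ≤ r → r ∉ Set.Ioo A B → η r = 0 := by
      intro r hr hrn
      rcases hr.eq_or_lt with h0 | h0
      · simp [hη, ← h0, Real.zero_rpow (neg_ne_zero.2 hα0.ne')]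
      · have : θ (Real.log r / k) = 0 := by
          apply hθzero
          rw [abs_div, abs_of_pos hk0, le_div_iff₀ hk0]
          by_contra hlt
          push Not at hlt
          rw [abs_lt] at hlt
          apply hrn
          constructor
          · rw [hA, ← Real.lt_log_iff_exp_lt h0]; linarith
          · rw [hB, ← Real.log_lt_iff_lt_exp h0]; linarith
        simp [hη, this]
    have hηd : ∀ r, 0 < r → deriv η r =
        r ^ (-α) / r * (-α * θ (Real.log r / k) + deriv θ (Real.log r / k) / k) := by
      intro r hr
      have d1 := Real.hasDerivAt_rpow_const (x := r) (p := -α) (Or.inl hr.ne')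
      have d2 := ((hθs.differentiable (by simp)) (Real.log r / k)).hasDerivAt.comp r
        ((Real.hasDerivAt_log hr.ne').div_const k)
      have := (d1.mul d2).deriv
      rw [show η = (fun x : ℝ => x ^ (-α)) * (θ ∘ fun x => Real.log x / k) from rfl, this,
        Real.rpow_sub_one hr.ne']
      simp only [Function.comp]
      field_simp
    have h2 := stab_C2 m p φ hp hφ hS hD A B η hA0 hAB hηs hη0
    have hrM : ∀ r : ℝ, 0 < r → r ^ (m + 1) / r ^ 2 * (r ^ (-α)) ^ 2 = r ^ (-(6/5) : ℝ) := by
      intro r hr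
      rw [← Real.rpow_natCast r (m+1), ← Real.rpow_natCast r 2, ← Real.rpow_natCast (r ^ (-α)) 2,
        ← Real.rpow_mul hr.le, ← Real.rpow_sub hr, ← Real.rpow_add hr]
      congr 1
      rw [hα]; push_cast; ring
    have hpos : ∀ r ∈ Set.Icc A B, 0 < r := fun r hr => lt_of_lt_of_le hA0 hr.1
    have hMA : ContinuousOn M (Set.Icc A B) := hMc.mono hpos
    have hθl : ContinuousOn (fun r => θ (Real.log r / k)) (Set.Icc A B) := by
      apply hθs.continuous.comp_continuousOn
      exact (Real.continuousOn_log.mono fun r hr => (hpos r hr).ne').div_const k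
    have hθl' : ContinuousOn (fun r => deriv θ (Real.log r / k)) (Set.Icc A B) := by
      apply hθ'c.comp_continuousOn
      exact (Real.continuousOn_log.mono fun r hr => (hpos r hr).ne').div_const k
    have hu : Set.uIcc A B = Set.Icc A B := Set.uIcc_of_le hAB.le
    have hMθ : ContinuousOn (fun r => M r * θ (Real.log r / k) ^ 2) (Set.Icc A B) :=
      hMA.mul (hθl.pow 2)
    have l1 : (m + 1 : ℝ) * ∫ r in A..B, M r * θ (Real.log r / k) ^ 2 ≤
        ∫ r in A..B, (m + 1) * r ^ (m + 1) / r ^ 2 * (p r ^ 2 / √(1 + p r ^ 2)) * η r ^ 2 := by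
      rw [← intervalIntegral.integral_const_mul]
      apply intervalIntegral.integral_mono_on hAB.le
      · apply ContinuousOn.intervalIntegrable
        rw [hu]; exact continuousOn_const.mul hMθ
      · apply ContinuousOn.intervalIntegrable
        rw [hu]
        have hηc : ContinuousOn η (Set.Icc A B) := hηs.continuousOn.mono hpos
        have hq : Continuous fun r => p r ^ 2 / √(1 + p r ^ 2) :=
          Continuous.div (by fun_prop) (by fun_prop) (fun r => by positivity)
        have hrr : ContinuousOn (fun r : ℝ => (m + 1) * r ^ (m + 1) / r ^ 2) (Set.Icc A B) :=
          ContinuousOn.div (by fun_prop) (by fun_prop) (fun r hr => by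
            have := hpos r hr
            positivity)
        exact (hrr.mul hq.continuousOn).mul (hηc.pow 2)
      · intro r hr
        have hr0 := hpos r hr
        have e1 : (m + 1 : ℝ) * r ^ (m + 1) / r ^ 2 * (p r ^ 2 / √(1 + p r ^ 2)) * η r ^ 2 =
            (m + 1) * (r ^ (-(6/5) : ℝ) * (p r ^ 2 / √(1 + p r ^ 2)) *
              θ (Real.log r / k) ^ 2) := by
          rw [← hrM r hr0]; simp only [hη]; ring
        rw [e1]
        simp only [hM]
        have h4 : 0 ≤ r ^ (-(6/5) : ℝ) := by positivity
        gcongr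
        have h5 : 0 < √(1 + p r ^ 2) := by positivity
        nlinarith [sq_nonneg (p r)]
    have l2 : ∫ r in A..B, r ^ (m + 1) / ((1 + p r ^ 2) * √(1 + p r ^ 2)) * p r ^ 2 *
          deriv η r ^ 2 ≤ α ^ 2 * (∫ r in A..B, M r * θ (Real.log r / k) ^ 2) +
          (2 * α * C + C ^ 2) / k * ∫ r in A..B, M r := by
      rw [← intervalIntegral.integral_const_mul, ← intervalIntegral.integral_const_mul,
        ← intervalIntegral.integral_add]
      rotate_left
      · apply ContinuousOn.intervalIntegrable
        rw [hu]; exact continuousOn_const.mul hMθ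
      · apply ContinuousOn.intervalIntegrable
        rw [hu]; exact continuousOn_const.mul hMA
      apply intervalIntegral.integral_mono_on hAB.le
      · apply ContinuousOn.intervalIntegrable
        rw [hu]
        have hηc : ContinuousOn (deriv η) (Set.Icc A B) :=
          (hηs.continuousOn_deriv_of_isOpen isOpen_Ioi (by simp)).mono hpos
        have hq : Continuous fun r => r ^ (m + 1) / ((1 + p r ^ 2) * √(1 + p r ^ 2)) :=
          Continuous.div (by fun_prop) (by fun_prop) hs
        exact (hq.continuousOn.mul (hpc.pow 2).continuousOn).mul (hηc.pow 2)
      · apply ContinuousOn.intervalIntegrable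
        rw [hu]; exact (continuousOn_const.mul hMθ).add (continuousOn_const.mul hMA)
      · intro r hr
        have hr0 := hpos r hr
        have e1 : r ^ (m + 1) / ((1 + p r ^ 2) * √(1 + p r ^ 2)) * p r ^ 2 *
          deriv η r ^ 2 = M r * (-α * θ (Real.log r / k) + deriv θ (Real.log r / k) / k) ^ 2 := by
          rw [hηd r hr0]
          simp only [hM]
          rw [← hrM r hr0]
          ring
        rw [e1]
        have t0 : 0 ≤ θ (Real.log r / k) := hθ0 _
        have t1 : θ (Real.log r / k) ≤ 1 := hθ1 _
        have t2 : |deriv θ (Real.log r / k)| ≤ C := hC _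
        set t := θ (Real.log r / k)
        set d := deriv θ (Real.log r / k)
        have hd1 : |d / k| ≤ C / k := by
          rw [abs_div, abs_of_pos hk0]; gcongr
        have hd2 := abs_le.1 hd1
        have hCk : 0 ≤ C / k := by positivity
        have x1 : -(t * (d / k)) ≤ C / k := by nlinarith
        have x2 : (d / k) ^ 2 ≤ C ^ 2 / k := by
          have : (d / k) ^ 2 ≤ (C / k) ^ 2 := sq_le_sq' hd2.1 hd2.2
          refine this.trans ?_
          rw [div_pow]
          gcongr
          nlinarith
        have x3 : (-α * t + d / k) ^ 2 ≤ α ^ 2 * t ^ 2 + (2 * α * C + C ^ 2) / k := by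
          have : (2 * α * C + C ^ 2) / k = 2 * α * (C / k) + C ^ 2 / k := by ring
          rw [this]
          nlinarith
        calc M r * (-α * t + d / k) ^ 2 ≤ M r * (α ^ 2 * t ^ 2 + (2 * α * C + C ^ 2) / k) :=
              mul_le_mul_of_nonneg_left x3 (hM0 r hr0)
          _ = _ := by ring
    have l3 : ∫ r in a..b, M r ≤ ∫ r in A..B, M r * θ (Real.log r / k) ^ 2 := by
      have e : ∫ r in a..b, M r = ∫ r in a..b, M r * θ (Real.log r / k) ^ 2 := by
        apply intervalIntegral.integral_congr
        intro r hr
        rw [Set.uIcc_of_le hab.le] at hr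
        have hr0 : 0 < r := lt_of_lt_of_le ha hr.1
        have : θ (Real.log r / k) = 1 := by
          apply hθone
          rw [abs_div, abs_of_pos hk0, div_le_one hk0, abs_le]
          have := Real.log_le_log ha hr.1
          have := Real.log_le_log hr0 hr.2
          constructor
          · linarith [neg_abs_le (Real.log a)]
          · linarith [le_abs_self (Real.log b)]
        simp [this]
      rw [e]
      apply intervalIntegral.integral_mono_interval hAa hab.le hbB
      · refine (ae_restrict_iff' measurableSet_Ioc).2 (Eventually.of_forall fun r hr => ?_)
        exact mul_nonneg (hM0 r (hA0.trans hr.1)) (sq_nonneg _)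
      · apply ContinuousOn.intervalIntegrable
        rw [hu]; exact hMθ
    have l4 : (2 * α * C + C ^ 2) / k * ∫ r in A..B, M r ≤ (2 * α * C + C ^ 2) * K / k := by
      have := hMK A B hA0 hAB
      rw [div_mul_eq_mul_div]
      gcongr
    have l5 := mul_le_mul_of_nonneg_left l3 hgap.le
    linarith
  intro r hr
  by_contra hne
  have hpne : ∀ᶠ x in 𝓝 r, p x ≠ 0 := hpc.continuousAt.eventually_ne hne
  have hpp : ∀ᶠ x in 𝓝 r, 0 < x := lt_mem_nhds hr
  obtain ⟨ε, hε, hball⟩ := Metric.eventually_nhds_iff.1 (hpne.and hpp)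
  have hin : ∀ x ∈ Set.Icc r (r + ε / 2), p x ≠ 0 ∧ 0 < x := fun x hx => by
    apply hball
    rw [Real.dist_eq, abs_of_nonneg (by linarith [hx.1])]
    linarith [hx.2]
  have hlt : r < r + ε / 2 := by linarith
  have hδ : 0 < ∫ x in r..(r + ε / 2), M x := by
    apply intervalIntegral.intervalIntegral_pos_of_pos_on (hMii _ _ hr hlt) _ hlt
    intro x hx
    obtain ⟨h1, h2⟩ := hin x (Set.Ioo_subset_Icc_self hx)
    simp only [hM]
    positivity
  set δ := ∫ x in r..(r + ε / 2), M x
  have htend : Tendsto (fun k : ℝ => (2 * α * C + C ^ 2) * K / k) atTop (𝓝 0) :=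
    tendsto_const_nhds.div_atTop tendsto_id
  have hle : ((m + 1 : ℝ) - α ^ 2) * δ ≤ 0 := by
    refine ge_of_tendsto htend ?_
    filter_upwards [eventually_ge_atTop (1:ℝ), eventually_ge_atTop |Real.log r|,
      eventually_ge_atTop |Real.log (r + ε / 2)|] with k h1 h2 h3
    exact main k h1 r (r + ε / 2) hr hlt h2 h3
  have := mul_pos hgap hδ
  linarith

lemma grad_radial_s7 {n : ℕ} (v : Euc n → ℝ) (k : ℝ → ℝ) (hv : ∀ x, v x = k ‖x‖) (x : Euc n)
    (hx : x ≠ 0) (hk : DifferentiableAt ℝ k ‖x‖) :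
    gradient v x = (deriv k ‖x‖ / ‖x‖) • x := by
  have hx' : ‖x‖ ≠ 0 := norm_ne_zero_iff.2 hx
  have h1 : HasFDerivAt (fun y : Euc n => ‖y‖) ((1 / (2 * √(‖x‖ ^ 2))) • (2 • innerSL ℝ x)) x := by
    have := (hasStrictFDerivAt_norm_sq x).hasFDerivAt.sqrt (pow_ne_zero 2 hx')
    refine this.congr_of_eventuallyEq (Eventually.of_forall fun y => ?_)
    exact (Real.sqrt_sq (norm_nonneg y)).symm
  have h2 := hk.hasDerivAt.comp_hasFDerivAt x h1
  have h3 : HasGradientAt v ((deriv k ‖x‖ / ‖x‖) • x) x := by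
    rw [hasGradientAt_iff_hasFDerivAt, show v = k ∘ fun y => ‖y‖ from funext hv]
    refine h2.congr_fderiv ?_
    ext y
    simp [Real.sqrt_sq (norm_nonneg x)]
    field_simp
  exact h3.gradient

lemma radint (m : ℕ) : ∃ c : ℝ, 0 < c ∧ ∀ (F : ℝ → ℝ) (a b : ℝ), 0 < a → a < b →
    (∀ r, 0 < r → r ∉ Set.Icc a b → F r = 0) →
    ∫ x : Euc (m + 2), F ‖x‖ = c * ∫ r in a..b, r ^ (m + 1) * F r := by
  refine ⟨(m + 2) * (volume : Measure (Euc (m + 2))).real (ball 0 1), ?_, ?_⟩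
  · have : 0 < (volume : Measure (Euc (m + 2))).real (ball 0 1) :=
      ENNReal.toReal_pos (measure_ball_pos _ _ one_pos).ne' measure_ball_lt_top.ne
    positivity
  · intro F a b ha hab hF
    rw [integral_fun_norm_addHaar (volume : Measure (Euc (m + 2))) F]
    have e : ∫ r in Set.Ioi (0:ℝ), r ^ (m + 1) * F r = ∫ r in a..b, r ^ (m + 1) * F r := by
      rw [intervalIntegral.integral_of_le hab.le, ← integral_Icc_eq_integral_Ioc]
      apply setIntegral_eq_of_subset_of_forall_sdiff_eq_zero measurableSet_Ioi
      · exact fun r hr => lt_of_lt_of_le ha hr.1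
      · intro r hr
        rw [hF r hr.1 hr.2, mul_zero]
    rw [← e]
    simp only [finrank_euclideanSpace, Fintype.card_fin, smul_eq_mul, nsmul_eq_mul,
      Nat.cast_add, Nat.cast_ofNat, show m + 2 - 1 = m + 1 from rfl]
    ring

lemma deriv_zero_off (ζ : ℝ → ℝ) (a b : ℝ) (h0 : ∀ r, 0 ≤ r → r ∉ Set.Icc a b → ζ r = 0)
    (r : ℝ) (hr : 0 < r) (hr' : r ∉ Set.Icc a b) : deriv ζ r = 0 := by
  have : ζ =ᶠ[𝓝 r] fun _ => 0 := by
    filter_upwards [lt_mem_nhds hr, isClosed_Icc.isOpen_compl.mem_nhds hr'] with x hx hx'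
    exact h0 x hx.le hx'
  rw [this.deriv_eq]; simp

lemma testFun_radial {n : ℕ} (ζ : ℝ → ℝ) (a b : ℝ) (ha : 0 < a)
    (hζ : ContDiffOn ℝ (⊤ : ℕ∞) ζ (Set.Ioi 0))
    (h0 : ∀ r, 0 ≤ r → r ∉ Set.Icc a b → ζ r = 0) :
    IsTestFun (Set.univ : Set (Euc n)) (fun x => ζ ‖x‖) := by
  refine ⟨?_, ?_, Set.subset_univ _⟩
  · rw [contDiff_iff_contDiffAt]
    intro x
    by_cases hx : x = 0
    · have : (fun x : Euc n => ζ ‖x‖) =ᶠ[𝓝 x] fun _ => 0 := by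
        filter_upwards [Metric.ball_mem_nhds x ha] with y hy
        rw [hx, mem_ball_zero_iff] at hy
        exact h0 _ (norm_nonneg _) fun h => absurd h.1 (not_le.2 hy)
      exact contDiffAt_const.congr_of_eventuallyEq this
    · exact (hζ.contDiffAt (isOpen_Ioi.mem_nhds (norm_pos_iff.2 hx))).comp x
        (contDiffAt_norm ℝ hx)
  · refine HasCompactSupport.of_support_subset_isCompact (isCompact_closedBall (0 : Euc n) b) ?_
    intro x hx
    rw [mem_closedBall_zero_iff]
    by_contra hlt
    exact hx (h0 _ (norm_nonneg _) fun h => hlt h.2)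

lemma rpow_three_half (s : ℝ) (hs : 0 < s) : s ^ ((3:ℝ)/2) = s * √s := by
  rw [Real.sqrt_eq_rpow, show (3:ℝ)/2 = 1 + 1/2 by norm_num, Real.rpow_add hs, Real.rpow_one]

/-- One dimensional weak formulation. -/
lemma weak_one (m : ℕ) (f : ℝ → ℝ) (u : Euc (m + 2) → ℝ) (h : ℝ → ℝ)
    (hh : Differentiable ℝ h) (hu : ∀ x, u x = h ‖x‖)
    (hw : IsWeakSolution (Set.univ : Set (Euc (m + 2))) f u)
    (a b : ℝ) (ζ : ℝ → ℝ) (ha : 0 < a) (hab : a < b)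
    (hζ : ContDiffOn ℝ (⊤ : ℕ∞) ζ (Set.Ioi 0))
    (h0 : ∀ r, 0 ≤ r → r ∉ Set.Icc a b → ζ r = 0) :
    ∫ r in a..b, r ^ (m + 1) * (deriv h r * deriv ζ r / √(1 + deriv h r ^ 2)) =
      ∫ r in a..b, r ^ (m + 1) * (f (h r) * ζ r) := by
  obtain ⟨c, hc, hrad⟩ := radint m
  have key := hw.2.2.2 _ (testFun_radial ζ a b ha hζ h0)
  have hne : ∀ᵐ x : Euc (m + 2), x ≠ 0 := compl_mem_ae_iff.2 (measure_singleton 0)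
  have e1 : ∫ x : Euc (m + 2), ⟪gradient u x, gradient (fun x => ζ ‖x‖) x⟫ /
      √(1 + ‖gradient u x‖ ^ 2) = ∫ x : Euc (m + 2),
      (fun r => deriv h r * deriv ζ r / √(1 + deriv h r ^ 2)) ‖x‖ := by
    apply integral_congr_ae
    filter_upwards [hne] with x hx
    have hx' : 0 < ‖x‖ := norm_pos_iff.2 hx
    have dζ : DifferentiableAt ℝ ζ ‖x‖ :=
      (hζ.differentiableOn (by simp)).differentiableAt (isOpen_Ioi.mem_nhds hx')
    rw [grad_radial_s7 u h hu x hx (hh _), grad_radial_s7 _ ζ (fun _ => rfl) x hx dζ]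
    have i1 : ⟪(deriv h ‖x‖ / ‖x‖) • x, (deriv ζ ‖x‖ / ‖x‖) • x⟫ =
        deriv h ‖x‖ * deriv ζ ‖x‖ := by
      rw [real_inner_smul_left, real_inner_smul_right, real_inner_self_eq_norm_sq]
      field_simp
    have i2 : ‖(deriv h ‖x‖ / ‖x‖) • x‖ ^ 2 = deriv h ‖x‖ ^ 2 := by
      rw [norm_smul, mul_pow, Real.norm_eq_abs, sq_abs]; field_simp
    rw [i1, i2]
  have e2 : ∫ x : Euc (m + 2), f (u x) * ζ ‖x‖ = ∫ x : Euc (m + 2),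
      (fun r => f (h r) * ζ r) ‖x‖ := by
    simp only [hu]
  rw [Measure.restrict_univ, e1, e2, hrad (fun r => deriv h r * deriv ζ r / √(1 + deriv h r ^ 2)) a b ha hab,
    hrad (fun r => f (h r) * ζ r) a b ha hab] at key
  · exact mul_left_cancel₀ hc.ne' key
  · intro r hr hr'; simp only [h0 r hr.le hr', mul_zero]
  · intro r hr hr'; simp only [deriv_zero_off ζ a b h0 r hr hr', mul_zero, zero_div]

lemma stab_one (m : ℕ) (f : ℝ → ℝ) (u : Euc (m + 2) → ℝ) (h : ℝ → ℝ)
    (hh : Differentiable ℝ h) (hu : ∀ x, u x = h ‖x‖)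
    (hw : IsStableSolution (Set.univ : Set (Euc (m + 2))) f u) :
    Stab1 m (deriv h) (fun r => deriv f (h r)) := by
  intro a b ζ ha hab hζ h0
  obtain ⟨c, hc, hrad⟩ := radint m
  have key := hw.2.2 _ (testFun_radial ζ a b ha hζ h0)
  have hne : ∀ᵐ x : Euc (m + 2), x ≠ 0 := compl_mem_ae_iff.2 (measure_singleton 0)
  have e1 : ∫ x : Euc (m + 2), (‖gradient (fun x => ζ ‖x‖) x‖ ^ 2 / √(1 + ‖gradient u x‖ ^ 2)
        - ⟪gradient u x, gradient (fun x => ζ ‖x‖) x⟫ ^ 2 /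
          (1 + ‖gradient u x‖ ^ 2) ^ ((3:ℝ)/2)) = ∫ x : Euc (m + 2),
      (fun r => deriv ζ r ^ 2 / ((1 + deriv h r ^ 2) * √(1 + deriv h r ^ 2))) ‖x‖ := by
    apply integral_congr_ae
    filter_upwards [hne] with x hx
    have hx' : 0 < ‖x‖ := norm_pos_iff.2 hx
    have dζ : DifferentiableAt ℝ ζ ‖x‖ :=
      (hζ.differentiableOn (by simp)).differentiableAt (isOpen_Ioi.mem_nhds hx')
    rw [grad_radial_s7 u h hu x hx (hh _), grad_radial_s7 _ ζ (fun _ => rfl) x hx dζ]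
    have i1 : ⟪(deriv h ‖x‖ / ‖x‖) • x, (deriv ζ ‖x‖ / ‖x‖) • x⟫ =
        deriv h ‖x‖ * deriv ζ ‖x‖ := by
      rw [real_inner_smul_left, real_inner_smul_right, real_inner_self_eq_norm_sq]
      field_simp
    have i2 : ‖(deriv h ‖x‖ / ‖x‖) • x‖ ^ 2 = deriv h ‖x‖ ^ 2 := by
      rw [norm_smul, mul_pow, Real.norm_eq_abs, sq_abs]; field_simp
    have i3 : ‖(deriv ζ ‖x‖ / ‖x‖) • x‖ ^ 2 = deriv ζ ‖x‖ ^ 2 := by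
      rw [norm_smul, mul_pow, Real.norm_eq_abs, sq_abs]; field_simp
    rw [i1, i2, i3, rpow_three_half _ (by positivity)]
    have hs : 0 < 1 + deriv h ‖x‖ ^ 2 := by positivity
    have hs' : 0 < √(1 + deriv h ‖x‖ ^ 2) := by positivity
    generalize √(1 + deriv h ‖x‖ ^ 2) = w at *
    field_simp
    ring
  have e2 : ∫ x : Euc (m + 2), deriv f (u x) * ζ ‖x‖ ^ 2 = ∫ x : Euc (m + 2),
      (fun r => deriv f (h r) * ζ r ^ 2) ‖x‖ := by
    simp only [hu]
  rw [Measure.restrict_univ, e1, e2, hrad (fun r => deriv ζ r ^ 2 / ((1 + deriv h r ^ 2) * √(1 + deriv h r ^ 2))) a b ha hab,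
    hrad (fun r => deriv f (h r) * ζ r ^ 2) a b ha hab] at key
  · exact le_of_mul_le_mul_left key hc
  · intro r hr hr'; simp only [h0 r hr.le hr']; simp
  · intro r hr hr'; simp only [deriv_zero_off ζ a b h0 r hr hr']; simp

lemma hasDerivAt_quot (p : ℝ → ℝ) (p' r : ℝ) (hp : HasDerivAt p p' r) :
    HasDerivAt (fun r => p r / √(1 + p r ^ 2)) (p' / ((1 + p r ^ 2) * √(1 + p r ^ 2))) r := by
  have hs : 0 < 1 + p r ^ 2 := by positivity
  have hs' : 0 < √(1 + p r ^ 2) := by positivity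
  have h1 : HasDerivAt (fun r => 1 + p r ^ 2) (2 * p r * p') r := by
    simpa using (hp.pow 2).const_add 1
  have := hp.div (h1.sqrt hs.ne') hs'.ne'
  refine HasDerivAt.congr_deriv this ?_
  have hsq := Real.sq_sqrt hs.le
  rw [hsq]
  generalize √(1 + p r ^ 2) = w at *
  field_simp
  rw [hsq]; ring

/-- The Euler-Lagrange equation. -/
lemma ode_one (m : ℕ) (f : ℝ → ℝ) (u : Euc (m + 2) → ℝ) (h : ℝ → ℝ) (hf : Continuous f)
    (hh : ContDiff ℝ 3 h) (hu : ∀ x, u x = h ‖x‖)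
    (hw : IsWeakSolution (Set.univ : Set (Euc (m + 2))) f u) :
    ∀ r, 0 < r → (m + 1) * r ^ m * (deriv h r / √(1 + deriv h r ^ 2)) + r ^ (m + 1) *
      (deriv (deriv h) r / ((1 + deriv h r ^ 2) * √(1 + deriv h r ^ 2))) +
      r ^ (m + 1) * f (h r) = 0 := by
  have hhd : Differentiable ℝ h := hh.differentiable (by norm_num)
  have hp : ContDiff ℝ 2 (deriv h) := by
    have : ContDiff ℝ (2 + 1) h := by simpa [show (2:WithTop ℕ∞) + 1 = 3 by norm_num] using hh
    exact (contDiff_succ_iff_deriv.1 this).2.2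
  have hpd : Differentiable ℝ (deriv h) := hp.differentiable (by norm_num)
  have hp' : Continuous (deriv (deriv h)) := hp.continuous_deriv (by norm_num)
  have hpc := hp.continuous
  have hhc := hh.continuous
  set p := deriv h with hpdef
  have hs : ∀ r, (1 + p r ^ 2) * √(1 + p r ^ 2) ≠ 0 := fun r => by positivity
  have hs' : ∀ r, √(1 + p r ^ 2) ≠ 0 := fun r => by positivity
  have hPc : Continuous fun r => p r / √(1 + p r ^ 2) :=
    Continuous.div (by fun_prop) (by fun_prop) hs'
  have hBc : Continuous fun r => deriv p r / ((1 + p r ^ 2) * √(1 + p r ^ 2)) :=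
    Continuous.div (by fun_prop) (by fun_prop) hs
  set A' : ℝ → ℝ := fun r => (m + 1) * r ^ m * (p r / √(1 + p r ^ 2)) + r ^ (m + 1) *
      (deriv p r / ((1 + p r ^ 2) * √(1 + p r ^ 2))) with hA'
  have hA'c : Continuous A' := by simp only [hA']; fun_prop
  have hAd : ∀ r, HasDerivAt (fun r => r ^ (m + 1) * (p r / √(1 + p r ^ 2))) (A' r) r := by
    intro r
    have := (hasDerivAt_pow (m + 1) r).mul (hasDerivAt_quot p _ r (hpd r).hasDerivAt)
    refine HasDerivAt.congr_deriv this ?_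
    simp [hA']
  have hFc : Continuous fun r => A' r + r ^ (m + 1) * f (h r) := by fun_prop
  have hae : ∀ᵐ r : ℝ, r ∈ Set.Ioi (0:ℝ) → A' r + r ^ (m + 1) * f (h r) = 0 := by
    apply isOpen_Ioi.ae_eq_zero_of_integral_contDiff_smul_eq_zero
      (hFc.locallyIntegrable.locallyIntegrableOn _)
    intro ζ hζ hζc hζs
    have hK : IsCompact (insert (1:ℝ) (tsupport ζ)) := IsCompact.insert hζc 1
    have hKs : insert (1:ℝ) (tsupport ζ) ⊆ Set.Ioi 0 := by
      intro x hx
      rcases hx with rfl | hx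
      · exact (one_pos : (0:ℝ) < 1)
      · exact hζs hx
    obtain ⟨a, haK, ha⟩ := hK.exists_isLeast (Set.insert_nonempty _ _)
    obtain ⟨b, hbK, hb⟩ := hK.exists_isGreatest (Set.insert_nonempty _ _)
    have ha0 : 0 < a := hKs haK
    have hle : a ≤ b := ha hbK
    have hsupp : ∀ r, r ∉ Set.Icc a b → ζ r = 0 := by
      intro r hr
      by_contra hne
      have : r ∈ insert (1:ℝ) (tsupport ζ) := Or.inr (subset_tsupport _ hne)
      exact hr ⟨ha this, hb this⟩
    have h0a : 0 < a / 2 := by linarith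
    have hab : a / 2 < b + 1 := by linarith
    have hz : ∀ r, 0 ≤ r → r ∉ Set.Icc (a / 2) (b + 1) → ζ r = 0 := fun r _ hr =>
      hsupp r fun h => hr ⟨by linarith [h.1], by linarith [h.2]⟩
    have w := weak_one m f u h hhd hu hw (a / 2) (b + 1) ζ h0a hab hζ.contDiffOn hz
    have hζ'c : Continuous (deriv ζ) := hζ.continuous_deriv (by simp)
    have hζcc := hζ.continuous
    have ibp := intervalIntegral.integral_mul_deriv_eq_deriv_mul (a := a / 2) (b := b + 1)
      (fun x _ => hAd x) (fun x _ => ((hζ.differentiable (by simp)) x).hasDerivAt)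
      (hA'c.intervalIntegrable _ _) (hζ'c.intervalIntegrable _ _)
    rw [hsupp (a / 2) (fun h => by linarith [h.1]), hsupp (b + 1) (fun h => by linarith [h.2])]
      at ibp
    have e : ∫ r in (a/2)..(b+1), r ^ (m + 1) * (p r * deriv ζ r / √(1 + p r ^ 2)) =
        ∫ r in (a/2)..(b+1), r ^ (m + 1) * (p r / √(1 + p r ^ 2)) * deriv ζ r := by
      congr 1; ext r; ring
    rw [e, ibp] at w
    have hss : Function.support (fun x => ζ x • (A' x + x ^ (m + 1) * f (h x))) ⊆
        Set.Ioc (a / 2) (b + 1) := by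
      intro r hr
      by_contra hne
      apply hr
      have : ζ r = 0 := hsupp r fun h => hne ⟨by linarith [h.1], by linarith [h.2]⟩
      simp [this]
    rw [← intervalIntegral.integral_eq_integral_of_support_subset hss]
    have e2 : ∫ r in (a/2)..(b+1), ζ r • (A' r + r ^ (m + 1) * f (h r)) =
        (∫ r in (a/2)..(b+1), A' r * ζ r) + ∫ r in (a/2)..(b+1), r ^ (m + 1) * (f (h r) * ζ r) := by
      rw [← intervalIntegral.integral_add]
      · congr 1; ext r; simp only [smul_eq_mul]; ring
      · exact (hA'c.mul hζcc).intervalIntegrable _ _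
      · apply Continuous.intervalIntegrable; fun_prop
    rw [e2, ← w]
    ring
  have heq : (fun r => A' r + r ^ (m + 1) * f (h r)) =ᵐ[volume.restrict (Set.Ioi 0)] 0 := by
    rw [EventuallyEq, ae_restrict_iff' measurableSet_Ioi]
    exact hae
  have := Measure.eqOn_open_of_ae_eq heq isOpen_Ioi hFc.continuousOn continuousOn_const
  intro r hr
  exact this hr

lemma lin_one (m : ℕ) (f h : ℝ → ℝ) (hf : ContDiff ℝ 1 f) (hh : ContDiff ℝ 3 h)
    (hode : ∀ r, 0 < r → (m + 1) * r ^ m * (deriv h r / √(1 + deriv h r ^ 2)) + r ^ (m + 1) *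
      (deriv (deriv h) r / ((1 + deriv h r ^ 2) * √(1 + deriv h r ^ 2))) +
      r ^ (m + 1) * f (h r) = 0) :
    ∀ r, 0 < r → HasDerivAt
      (fun r => r ^ (m + 1) * (deriv (deriv h) r / ((1 + deriv h r ^ 2) * √(1 + deriv h r ^ 2))))
      ((m + 1) * r ^ (m + 1) / r ^ 2 * (deriv h r / √(1 + deriv h r ^ 2))
        - r ^ (m + 1) * deriv f (h r) * deriv h r) r := by
  have hhd : Differentiable ℝ h := hh.differentiable (by norm_num)
  have hp : ContDiff ℝ 2 (deriv h) := by
    have : ContDiff ℝ (2 + 1) h := by simpa [show (2:WithTop ℕ∞) + 1 = 3 by norm_num] using hh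
    exact (contDiff_succ_iff_deriv.1 this).2.2
  have hpd : Differentiable ℝ (deriv h) := hp.differentiable (by norm_num)
  set p := deriv h with hpdef
  have hX : ∀ r, 0 < r → deriv p r / ((1 + p r ^ 2) * √(1 + p r ^ 2)) =
      -f (h r) - (m + 1) * ((p r / √(1 + p r ^ 2)) / r) := by
    intro r hr
    have := hode r hr
    generalize p r / √(1 + p r ^ 2) = P at *
    generalize deriv p r / ((1 + p r ^ 2) * √(1 + p r ^ 2)) = B at *
    have hrm : r ^ m ≠ 0 := by positivity
    have h2 : r ^ m * ((m + 1) * P + r * B + r * f (h r)) = 0 := by rw [← this]; ring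
    have h3 := (mul_eq_zero.1 h2).resolve_left hrm
    field_simp
    linarith
  intro r hr
  have d1 : HasDerivAt (fun r => f (h r)) (deriv f (h r) * p r) r :=
    ((hf.differentiable one_ne_zero) (h r)).hasDerivAt.comp r (hhd r).hasDerivAt
  have d2 := (hasDerivAt_quot p _ r (hpd r).hasDerivAt).div (hasDerivAt_id r) hr.ne'
  have d3 := (hasDerivAt_pow (m + 1) r).mul (d1.neg.sub (d2.const_mul ((m:ℝ) + 1)))
  have hev : (fun r => r ^ (m + 1) * (deriv p r / ((1 + p r ^ 2) * √(1 + p r ^ 2)))) =ᶠ[𝓝 r]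
      (fun r => r ^ (m + 1) * (-f (h r) - (m + 1) * ((p r / √(1 + p r ^ 2)) / r))) := by
    filter_upwards [lt_mem_nhds hr] with x hx
    rw [hX x hx]
  refine HasDerivAt.congr_of_eventuallyEq ?_ hev
  refine HasDerivAt.congr_deriv d3 ?_
  have hXr := hX r hr
  simp only [Pi.sub_apply, Pi.neg_apply, Pi.div_apply, id, add_tsub_cancel_right, Nat.cast_add,
    Nat.cast_one]
  rw [← hXr]
  generalize p r / √(1 + p r ^ 2) = P at *
  generalize deriv p r / ((1 + p r ^ 2) * √(1 + p r ^ 2)) = B at *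
  field_simp
  ring

/-- **Theorem (Nonexistence of nonconstant radial stable solutions for `2 ≤ n ≤ 6`).**
Let `2 ≤ n ≤ 6`, `f ∈ C¹(ℝ)` and let `u` be a `W^{3,1}_loc(ℝⁿ)` stable solution of
`div(∇u/√(1+|∇u|²)) = -f(u)` in `ℝⁿ`, radially symmetric with respect to the origin.
Then `u` is constant (no growth assumption at infinity is needed). -/
theorem stmt_7 (n : ℕ) (hn : 2 ≤ n) (hn' : n ≤ 6) (f : ℝ → ℝ) (u : Euc n → ℝ) (g : ℝ → ℝ)
    (hf : ContDiff ℝ 1 f)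
    (hreg : ContDiff ℝ 3 u)
    (hstable : IsStableSolution (Set.univ : Set (Euc n)) f u)
    (hradial : ∀ x : Euc n, u x = g ‖x‖) :
    ∃ c₀ : ℝ, ∀ x : Euc n, u x = c₀ := by
  obtain ⟨m, rfl⟩ : ∃ m, n = m + 2 := ⟨n - 2, by omega⟩
  have hm : m ≤ 4 := by omega
  let e : Euc (m + 2) := EuclideanSpace.single 0 1
  have he : ‖e‖ = 1 := by simp [e]
  obtain ⟨h, hh⟩ : ∃ h : ℝ → ℝ, h = fun r => u (r • e) := ⟨_, rfl⟩
  have hhg : ∀ r, h r = g |r| := fun r => by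
    rw [hh]; simp only; rw [hradial, norm_smul, he, mul_one, Real.norm_eq_abs]
  have hu : ∀ x, u x = h ‖x‖ := fun x => by rw [hradial, hhg, abs_norm]
  have hh3 : ContDiff ℝ 3 h := by
    rw [hh]
    exact hreg.comp (contDiff_id.smul contDiff_const)
  have hhd : Differentiable ℝ h := hh3.differentiable (by norm_num)
  have heven : (fun r => h (-r)) = h := funext fun r => by rw [hhg, hhg, abs_neg]
  have hodd : ∀ r, deriv h r = - deriv h (-r) := fun r => by
    conv_lhs => rw [← heven]
    exact deriv_comp_neg h r
  have hp0 : deriv h 0 = 0 := by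
    have := hodd 0
    rw [neg_zero] at this
    linarith
  have hp : ContDiff ℝ 2 (deriv h) := by
    have : ContDiff ℝ (2 + 1) h := by simpa [show (2:WithTop ℕ∞) + 1 = 3 by norm_num] using hh3
    exact (contDiff_succ_iff_deriv.1 this).2.2
  have hz := core m hm (deriv h) (fun r => deriv f (h r)) (hp.of_le (by norm_num)) hp0
    ((hf.continuous_deriv le_rfl).comp hh3.continuous) (stab_one m f u h hhd hu hstable)
    (lin_one m f h hf hh3 (ode_one m f u h hf.continuous hh3 hu hstable.1))
  have hall : ∀ r, deriv h r = 0 := by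
    intro r
    rcases lt_trichotomy r 0 with hr | hr | hr
    · rw [hodd, hz (-r) (by linarith), neg_zero]
    · rw [hr, hp0]
    · exact hz r hr
  exact ⟨h 0, fun x => by rw [hu]; exact is_const_of_deriv_eq_zero hhd hall _ _⟩
end
end
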